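/- arXiv:2008.10044 — 2 statements merged into one kernel-verified Lean document; each statement's English description precedes it below -/
import Mathlib

section
/- Let A be a Nakayama algebra and S a simple module. Then pd S is finite and odd, or pd IS is finite and even; in particular, at least one of S and IS has finite projective dimension. -/
open CategoryTheory CategoryTheory.Limits

noncomputable section

namespace ArtinAlg

variable (A : Type) [Ring A]

/-- `M` admits a projective resolution of length at most `n`. -/
inductive ProjDimLE : ℕ → ModuleCat.{0} A → Prop
  | zero (M : ModuleCat.{0} A) (h : Projective M) : ProjDimLE 0 M
  | succ (n : ℕ) (M P : ModuleCat.{0} A) (f : P ⟶ M) (hP : Projective P) (hf : Epi f)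
      (h : ProjDimLE n (kernel f)) : ProjDimLE (n + 1) M

/-- `M` admits an injective coresolution of length at most `n`. -/
inductive InjDimLE : ℕ → ModuleCat.{0} A → Prop
  | zero (M : ModuleCat.{0} A) (h : Injective M) : InjDimLE 0 M
  | succ (n : ℕ) (M I : ModuleCat.{0} A) (f : M ⟶ I) (hI : Injective I) (hf : Mono f)
      (h : InjDimLE n (cokernel f)) : InjDimLE (n + 1) M

/-- The projective dimension `pd M ∈ ℕ∞`. -/
def projDim (M : ModuleCat.{0} A) : ℕ∞ :=
  sInf {d : ℕ∞ | ∃ n : ℕ, d = n ∧ ProjDimLE A n M}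

/-- The injective dimension `id M ∈ ℕ∞`. -/
def injDim (M : ModuleCat.{0} A) : ℕ∞ :=
  sInf {d : ℕ∞ | ∃ n : ℕ, d = n ∧ InjDimLE A n M}

/-- `f : P ⟶ M` is a projective cover: `P` is projective and `f` is an essential
(superfluous) epimorphism. -/
def IsProjectiveCoverHom {P M : ModuleCat.{0} A} (f : P ⟶ M) : Prop :=
  Projective P ∧ Epi f ∧ ∀ (N : ModuleCat.{0} A) (g : N ⟶ P), Epi (g ≫ f) → Epi g

/-- `P` is a projective cover of `M`. -/
def IsProjCoverOf (M P : ModuleCat.{0} A) : Prop :=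
  ∃ f : P ⟶ M, IsProjectiveCoverHom A f

/-- `f : M ⟶ I` is an injective envelope: `I` is injective and `f` is an essential
monomorphism. -/
def IsInjectiveEnvelopeHom {M I : ModuleCat.{0} A} (f : M ⟶ I) : Prop :=
  Injective I ∧ Mono f ∧ ∀ (N : ModuleCat.{0} A) (g : I ⟶ N), Mono (f ≫ g) → Mono g

/-- `I` is an injective envelope of `M`. -/
def IsInjEnvOf (M I : ModuleCat.{0} A) : Prop :=
  ∃ f : M ⟶ I, IsInjectiveEnvelopeHom A f

/-- `X ≅ Ω M`, the kernel of a projective cover of `M`. -/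
def IsSyzygyOf (M X : ModuleCat.{0} A) : Prop :=
  ∃ (P : ModuleCat.{0} A) (f : P ⟶ M), IsProjectiveCoverHom A f ∧ Nonempty (X ≅ kernel f)

/-- `X ≅ Σ M`, the cokernel of an injective envelope of `M`. -/
def IsCosyzygyOf (M X : ModuleCat.{0} A) : Prop :=
  ∃ (I : ModuleCat.{0} A) (f : M ⟶ I), IsInjectiveEnvelopeHom A f ∧ Nonempty (X ≅ cokernel f)

/-- `X ≅ Ω^n M`. -/
def IsNthSyzygy : ℕ → ModuleCat.{0} A → ModuleCat.{0} A → Prop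
  | 0, M, X => Nonempty (X ≅ M)
  | n + 1, M, X => ∃ Y, IsSyzygyOf A M Y ∧ IsNthSyzygy n Y X

/-- `X ≅ Σ^n M`. -/
def IsNthCosyzygy : ℕ → ModuleCat.{0} A → ModuleCat.{0} A → Prop
  | 0, M, X => Nonempty (X ≅ M)
  | n + 1, M, X => ∃ Y, IsCosyzygyOf A M Y ∧ IsNthCosyzygy n Y X

/-- `X` is a direct summand of `Y`. -/
def IsDirectSummandOf (X Y : ModuleCat.{0} A) : Prop :=
  ∃ (i : X ⟶ Y) (r : Y ⟶ X), i ≫ r = 𝟙 X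

/-- `X ∈ add W` : `X` is a direct summand of a finite direct sum of copies of `W`. -/
def InAdd (X W : ModuleCat.{0} A) : Prop :=
  ∃ n : ℕ, IsDirectSummandOf A X (ModuleCat.of A (Fin n → ↥W))

/-- The delooping level of `M` is at most `d` :
`Ω^d M ∈ add (A ⊕ Ω^{d+1} M')` for some finitely generated `M'`. -/
def DelLE (d : ℕ) (M : ModuleCat.{0} A) : Prop :=
  ∃ X, IsNthSyzygy A d M X ∧
    ∃ M' : ModuleCat.{0} A, Module.Finite A ↥M' ∧
      ∃ X', IsNthSyzygy A (d + 1) M' X' ∧ InAdd A X (ModuleCat.of A (A × ↥X'))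

/-- The delooping level `del M ∈ ℕ∞`. -/
def delLevel (M : ModuleCat.{0} A) : ℕ∞ :=
  sInf {d : ℕ∞ | ∃ n : ℕ, d = n ∧ DelLE A n M}

/-- The delooping level of the algebra: the supremum of `del S` over the simple modules. -/
def delAlg : ℕ∞ :=
  sSup {d : ℕ∞ | ∃ S : ModuleCat.{0} A, IsSimpleModule A ↥S ∧ delLevel A S = d}

/-- `Q` is a minimal injective cogenerator: the injective envelope of the direct sum of
a complete set of representatives of the simple modules. -/
def IsMinimalInjectiveCogenerator (Q : ModuleCat.{0} A) : Prop :=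
  ∃ (ι : Type) (_ : Fintype ι) (S : ι → ModuleCat.{0} A),
    (∀ i, IsSimpleModule A ↥(S i)) ∧
    (∀ T : ModuleCat.{0} A, IsSimpleModule A ↥T → ∃! i, Nonempty (↥T ≃ₗ[A] ↥(S i))) ∧
    IsInjEnvOf A (ModuleCat.of A (∀ i, ↥(S i))) Q

/-- The desuspending level of `M` is at most `d` :
`Σ^d M ∈ add (D(A) ⊕ Σ^{d+1} M')` for some finitely generated `M'`. -/
def DesLE (d : ℕ) (M : ModuleCat.{0} A) : Prop :=
  ∃ X, IsNthCosyzygy A d M X ∧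
    ∃ Q, IsMinimalInjectiveCogenerator A Q ∧
      ∃ M' : ModuleCat.{0} A, Module.Finite A ↥M' ∧
        ∃ X', IsNthCosyzygy A (d + 1) M' X' ∧ InAdd A X (ModuleCat.of A (↥Q × ↥X'))

/-- The desuspending level `des M ∈ ℕ∞`. -/
def desLevel (M : ModuleCat.{0} A) : ℕ∞ :=
  sInf {d : ℕ∞ | ∃ n : ℕ, d = n ∧ DesLE A n M}

/-- The desuspending level of the algebra. -/
def desAlg : ℕ∞ :=
  sSup {d : ℕ∞ | ∃ S : ModuleCat.{0} A, IsSimpleModule A ↥S ∧ desLevel A S = d}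

/-- The (small) finitistic projective dimension `fin-pro A`. -/
def finProDim : ℕ∞ :=
  sSup {d : ℕ∞ | ∃ M : ModuleCat.{0} A, Module.Finite A ↥M ∧ projDim A M = d ∧ d ≠ ⊤}

/-- The (small) finitistic injective dimension `fin-inj A`. -/
def finInjDim : ℕ∞ :=
  sSup {d : ℕ∞ | ∃ M : ModuleCat.{0} A, Module.Finite A ↥M ∧ injDim A M = d ∧ d ≠ ⊤}

/-- The big finitistic projective dimension `Fin-pro A`. -/
def bigFinProDim : ℕ∞ :=
  sSup {d : ℕ∞ | ∃ M : ModuleCat.{0} A, projDim A M = d ∧ d ≠ ⊤}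

/-- The big finitistic injective dimension `Fin-inj A`. -/
def bigFinInjDim : ℕ∞ :=
  sSup {d : ℕ∞ | ∃ M : ModuleCat.{0} A, injDim A M = d ∧ d ≠ ⊤}

/-- `M` is an indecomposable nonzero module. -/
def Indec (M : ModuleCat.{0} A) : Prop :=
  Nontrivial ↥M ∧ ∀ (N₁ N₂ : Submodule A ↥M), IsCompl N₁ N₂ → N₁ = ⊥ ∨ N₂ = ⊥

/-- `M` is serial (uniserial): its submodules form a chain. -/
def IsUniserial (M : ModuleCat.{0} A) : Prop :=
  ∀ N₁ N₂ : Submodule A ↥M, N₁ ≤ N₂ ∨ N₂ ≤ N₁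

/-- `A` is a Nakayama algebra: all finitely generated indecomposable modules are serial. -/
def IsNakayama : Prop :=
  ∀ M : ModuleCat.{0} A, Module.Finite A ↥M → Indec A M → IsUniserial A M

/-- `A` is connected: it is not a nontrivial product of algebras. -/
def IsConnectedAlgebra : Prop :=
  Nontrivial A ∧ ∀ e : A, IsIdempotentElem e → e ∈ Set.center A → e = 0 ∨ e = 1

/-- `A` is a cyclic Nakayama algebra: connected Nakayama with no simple projective module. -/
def IsCyclicNakayama : Prop :=
  IsNakayama A ∧ IsConnectedAlgebra A ∧
    ¬ ∃ S : ModuleCat.{0} A, IsSimpleModule A ↥S ∧ Projective S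

/-- `T ≅ top M` (and `top M` is simple): there is an essential epimorphism `M ⟶ T`. -/
def IsSimpleTopOf (M T : ModuleCat.{0} A) : Prop :=
  IsSimpleModule A ↥T ∧
    ∃ f : M ⟶ T, Epi f ∧ ∀ (N : ModuleCat.{0} A) (g : N ⟶ M), Epi (g ≫ f) → Epi g

/-- `S ≅ soc M` (and `soc M` is simple): there is an essential monomorphism `S ⟶ M`. -/
def IsSimpleSocOf (M S : ModuleCat.{0} A) : Prop :=
  IsSimpleModule A ↥S ∧
    ∃ f : S ⟶ M, Mono f ∧ ∀ (N : ModuleCat.{0} A) (g : M ⟶ N), Mono (f ≫ g) → Mono g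

/-- `0 ⟶ N ⟶ E ⟶ M ⟶ 0` is an almost split (Auslander-Reiten) sequence. -/
def IsAlmostSplitSeq {N E M : ModuleCat.{0} A} (f : N ⟶ E) (g : E ⟶ M) : Prop :=
  Mono f ∧ Epi g ∧ (∃ w : f ≫ g = 0, (ShortComplex.mk f g w).Exact) ∧
  (¬ ∃ s : M ⟶ E, s ≫ g = 𝟙 M) ∧ Indec A N ∧ Indec A M ∧
  ∀ (X : ModuleCat.{0} A) (h : X ⟶ M), (¬ ∃ s : M ⟶ X, s ≫ h = 𝟙 M) → ∃ h' : X ⟶ E, h' ≫ g = h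

/-- `N ≅ τ M`, the Auslander-Reiten translate of `M` : there is an almost split sequence
`0 ⟶ N ⟶ E ⟶ M ⟶ 0`. -/
def IsTauOf (N M : ModuleCat.{0} A) : Prop :=
  ∃ (E : ModuleCat.{0} A) (f : N ⟶ E) (g : E ⟶ M), IsAlmostSplitSeq A f g

/-- `U ≅ ψ S = τ⁻ top (I S)`. -/
def IsPsiOf (S U : ModuleCat.{0} A) : Prop :=
  ∃ I, IsInjEnvOf A S I ∧ ∃ T, IsSimpleTopOf A I T ∧ IsTauOf A T U

/-- `T ≅ γ S = τ soc (P S)`. -/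
def IsGammaOf (S T : ModuleCat.{0} A) : Prop :=
  ∃ P, IsProjCoverOf A S P ∧ ∃ U, IsSimpleSocOf A P U ∧ IsTauOf A T U

/-- `T ≅ φ S = top (I S)`. -/
def IsPhiOf (S T : ModuleCat.{0} A) : Prop :=
  ∃ I, IsInjEnvOf A S I ∧ IsSimpleTopOf A I T

/-- There is a `ψ`-path `(S_1, …, S_m)` of cardinality `m` ending in `S`. -/
def PsiPathTo (m : ℕ) (S : ModuleCat.{0} A) : Prop :=
  1 ≤ m ∧ ∃ c : ℕ → ModuleCat.{0} A,
    (∀ i < m, IsSimpleModule A ↥(c i)) ∧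
    (∀ i, i + 1 < m → IsPsiOf A (c i) (c (i + 1))) ∧
    Nonempty (c (m - 1) ≅ S)

/-- `a(S)`: the supremum of the cardinalities of `ψ`-paths ending in `S`. -/
def aVal (S : ModuleCat.{0} A) : ℕ∞ :=
  sSup {d : ℕ∞ | ∃ m : ℕ, d = m ∧ PsiPathTo A m S}

/-- `a(A)`: the maximum of `a(S)` over the simple modules which are not `ψ`-cyclic. -/
def aAlg : ℕ∞ :=
  sSup {d : ℕ∞ | ∃ S : ModuleCat.{0} A, IsSimpleModule A ↥S ∧ aVal A S ≠ ⊤ ∧ aVal A S = d}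

/-- `S` is a composition factor of `M`: a simple subquotient of `M`. -/
def IsCompFactorOf (S M : ModuleCat.{0} A) : Prop :=
  IsSimpleModule A ↥S ∧ ∃ N' N : Submodule A ↥M, N' ≤ N ∧
    Nonempty ((↥N ⧸ N'.comap N.subtype) ≃ₗ[A] ↥S)

/-- `e(S) = min {pd S, pd (I S)} = x`. -/
def ERelVal (S : ModuleCat.{0} A) (x : ℕ∞) : Prop :=
  ∃ I, IsInjEnvOf A S I ∧ x = min (projDim A S) (projDim A I)

/-- `e*(S) = min {id S, id (P S)} = x`. -/
def EStarVal (S : ModuleCat.{0} A) (x : ℕ∞) : Prop :=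
  ∃ P, IsProjCoverOf A S P ∧ x = min (injDim A S) (injDim A P)

/-- `T = h(S) = top (Ω^{e(S)} N S)`, the homological permutation. -/
def HRel (S T : ModuleCat.{0} A) : Prop :=
  IsSimpleModule A ↥S ∧ IsSimpleModule A ↥T ∧
  ∃ z : ℕ, ERelVal A S z ∧
    ∃ N, ((Odd z ∧ N = S) ∨ (Even z ∧ IsInjEnvOf A S N)) ∧
      ∃ X, IsNthSyzygy A z N X ∧ IsSimpleTopOf A X T

/-- `S = h*(T) = soc (Σ^{e*(T)} N* T)`, the inverse homological permutation. -/
def HStarRel (T S : ModuleCat.{0} A) : Prop :=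
  IsSimpleModule A ↥T ∧ IsSimpleModule A ↥S ∧
  ∃ z : ℕ, EStarVal A T z ∧
    ∃ N, ((Odd z ∧ N = T) ∨ (Even z ∧ IsProjCoverOf A T N)) ∧
      ∃ X, IsNthCosyzygy A z N X ∧ IsSimpleSocOf A X S

/-- The `t`-fold relational iterate of a relation on modules (up to isomorphism). -/
def IterRel (r : ModuleCat.{0} A → ModuleCat.{0} A → Prop) :
    ℕ → ModuleCat.{0} A → ModuleCat.{0} A → Prop
  | 0, X, Y => Nonempty (X ≅ Y)
  | n + 1, X, Y => ∃ Z, r X Z ∧ IterRel r n Z Y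

end ArtinAlg

namespace NakComb

/-- combinatorial first-hit predicate for the syzygy sequence -/
def Hit (F : ℕ → ℕ) : ℕ → ℕ → ℕ → Prop
  | i, j, 0 => j = F i
  | i, j, n + 1 => j ≠ F i ∧ Hit F j (F i) n

theorem hit_even (F : ℕ → ℕ) (m : ℕ) : ∀ i j : ℕ,
    (∀ k < m, F^[k] j ≠ F^[k+1] i) → (∀ k < m, F^[k+1] i ≠ F^[k+1] j) →
    F^[m] j = F^[m+1] i → Hit F i j (2 * m) := by
  induction m with
  | zero => intro i j _ _ h; simpa [Hit] using h
  | succ m ih =>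
    intro i j h1 h2 h3
    rw [show 2 * (m + 1) = 2 * m + 1 + 1 by ring]
    refine ⟨h1 0 (by omega), h2 0 (by omega), ih _ _ ?_ ?_ ?_⟩
    · intro k hk; exact h1 (k+1) (by omega)
    · intro k hk; exact h2 (k+1) (by omega)
    · exact h3

theorem hit_odd (F : ℕ → ℕ) (m : ℕ) : ∀ i j : ℕ,
    (∀ k ≤ m, F^[k] j ≠ F^[k+1] i) → (∀ k < m, F^[k+1] i ≠ F^[k+1] j) →
    F^[m+1] i = F^[m+1] j → Hit F i j (2 * m + 1) := by
  induction m with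
  | zero => intro i j h1 _ h; exact ⟨h1 0 (by omega), h⟩
  | succ m ih =>
    intro i j h1 h2 h3
    rw [show 2 * (m + 1) + 1 = (2 * m + 1) + 1 + 1 by ring]
    refine ⟨h1 0 (by omega), h2 0 (by omega), ih _ _ ?_ ?_ ?_⟩
    · intro k hk; exact h1 (k+1) (by omega)
    · intro k hk; exact h2 (k+1) (by omega)
    · exact h3

theorem periodic_of_range {α : Type*} [Finite α] (f : α → α) :
    ∃ N : ℕ, ∀ x, f^[N] x ∈ Function.periodicPts f := by
  classical
  have h : ∀ x : α, ∃ n : ℕ, f^[n] x ∈ Function.periodicPts f := by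
    intro x
    obtain ⟨i, j, hij, h⟩ := Finite.exists_ne_map_eq_of_infinite (fun n : ℕ => f^[n] x)
    wlog hlt : i < j generalizing i j
    · exact this j i hij.symm h.symm (by omega)
    refine ⟨i, Function.mk_mem_periodicPts (n := j - i) (by omega) ?_⟩
    change f^[j - i] (f^[i] x) = f^[i] x
    rw [← Function.iterate_add_apply, show j - i + i = j by omega]
    exact h.symm
  choose n hn using h
  obtain ⟨N, hN⟩ := (Set.finite_range n).bddAbove
  refine ⟨N, fun x => ?_⟩
  have : n x ≤ N := hN ⟨x, rfl⟩
  rw [show N = (N - n x) + n x by omega, Function.iterate_add_apply]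
  exact ((Function.bijOn_periodicPts f).mapsTo.iterate _) (hn x)

section
variable {V : Type} (nx : Option V → Option V) (c : Option V → ℕ)

theorem c_iter (hc : ∀ a, c a ≤ c (nx a) + 1) (k : ℕ) : ∀ a, c a ≤ c (nx^[k] a) + k := by
  induction k with
  | zero => intro a; simp
  | succ k ih =>
    intro a
    have := ih (nx a); have := hc a
    rw [Function.iterate_succ_apply]; omega

theorem nx_iter_none (h0 : nx none = none) (k : ℕ) : nx^[k] none = none :=
  Function.iterate_fixed h0 k

theorem nx_iter_inj (h0 : nx none = none) (hinj : ∀ a b v, nx a = some v → nx b = some v → a = b) (k : ℕ) :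
    ∀ a b v, nx^[k] a = some v → nx^[k] b = some v → a = b := by
  induction k with
  | zero => intro a b v h1 h2; simp at h1 h2; rw [h1, h2]
  | succ k ih =>
    intro a b v h1 h2
    rw [Function.iterate_succ_apply'] at h1 h2
    have h := hinj _ _ _ h1 h2
    cases hh : nx^[k] a with
    | none => rw [hh, h0] at h1; cases h1
    | some w => exact ih _ _ _ hh (h ▸ hh)

/-- `psi v = w` with witness `k` -/
def RelK (v w : V) (k : ℕ) : Prop :=
  nx^[k+1] (some w) = some v ∧ c (some w) ≤ k + 1 ∧ k < c (nx (some w))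

theorem relK_unique_aux (h0 : nx none = none)
    (hinj : ∀ a b v, nx a = some v → nx b = some v → a = b)
    (hc : ∀ a, c a ≤ c (nx a) + 1) {v w w' : V} {k k' : ℕ}
    (h : RelK nx c v w k) (h' : RelK nx c v w' k') : ¬ k < k' := by
  intro hlt
  obtain ⟨h1, h2, h3⟩ := h
  obtain ⟨h1', h2', h3'⟩ := h'
  rw [show k' + 1 = (k + 1) + (k' - k) by omega, Function.iterate_add_apply] at h1'
  have e := nx_iter_inj nx h0 hinj _ _ _ _ h1 h1'
  have := c_iter nx c hc (k' - k - 1) (nx (some w'))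
  rw [← Function.iterate_succ_apply, show (k' - k - 1).succ = k' - k by omega, ← e] at this
  omega

theorem relK_unique (h0 : nx none = none)
    (hinj : ∀ a b v, nx a = some v → nx b = some v → a = b)
    (hc : ∀ a, c a ≤ c (nx a) + 1) {v w w' : V} {k k' : ℕ}
    (h : RelK nx c v w k) (h' : RelK nx c v w' k') : w = w' ∧ k = k' := by
  have e : k = k' := by
    have := relK_unique_aux nx c h0 hinj hc h h'
    have := relK_unique_aux nx c h0 hinj hc h' h
    omega
  subst e
  exact ⟨Option.some_injective _ (nx_iter_inj nx h0 hinj _ _ _ _ h.1 h'.1), rfl⟩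

open Classical in
/-- the partial map psi -/
noncomputable def psi : Option V → Option V
  | none => none
  | some v => if h : ∃ w k, RelK nx c v w k then some h.choose else none

theorem psi_eq (h0 : nx none = none)
    (hinj : ∀ a b v, nx a = some v → nx b = some v → a = b)
    (hc : ∀ a, c a ≤ c (nx a) + 1) {v w : V} {k : ℕ}
    (h : RelK nx c v w k) : psi nx c (some v) = some w := by
  have hh : ∃ w k, RelK nx c v w k := ⟨w, k, h⟩
  simp only [psi, dif_pos hh]
  obtain ⟨k', h'⟩ := hh.choose_spec
  rw [(relK_unique nx c h0 hinj hc h' h).1]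

/-- end-of-projective function on positions -/
def FF (t : V) (i : ℕ) : ℕ := i + c (nx^[i] (some t))

theorem FF_mono (hc : ∀ a, c a ≤ c (nx a) + 1) (t : V) : Monotone (FF nx c t) := by
  apply monotone_nat_of_le_succ
  intro n
  have := hc (nx^[n] (some t))
  rw [← Function.iterate_succ_apply' nx] at this
  simp only [FF]
  change c (nx^[n] (some t)) ≤ c (nx^[n+1] (some t)) + 1 at this
  omega

theorem pos_none (h0 : nx none = none) {t : V} {x y : ℕ} (hxy : x ≤ y)
    (hx : nx^[x] (some t) = none) : nx^[y] (some t) = none := by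
  rw [show y = (y - x) + x by omega, Function.iterate_add_apply, hx, nx_iter_none nx h0]

theorem rel_step (h0 : nx none = none) (hc1 : ∀ v, 1 ≤ c (some v)) {t v : V} {x y : ℕ}
    (hx : FF nx c t x ≤ y) (hy : y < FF nx c t (x+1)) (hv : nx^[y] (some t) = some v) :
    ∃ w, nx^[x] (some t) = some w ∧ RelK nx c v w (y - x - 1) := by
  have hxy : x ≤ y := by simp only [FF] at hx; omega
  cases hw : nx^[x] (some t) with
  | none => rw [pos_none nx h0 hxy hw] at hv; cases hv
  | some w =>
    have := hc1 w
    simp only [FF, hw, Function.iterate_succ_apply'] at hx hy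
    refine ⟨w, rfl, ?_, by omega, by omega⟩
    rw [← hw, ← Function.iterate_add_apply, ← hv]
    congr 1; omega

theorem interval_psi (h0 : nx none = none)
    (hinj : ∀ a b v, nx a = some v → nx b = some v → a = b)
    (hc : ∀ a, c a ≤ c (nx a) + 1) (hc1 : ∀ v, 1 ≤ c (some v)) (t : V) (m : ℕ) :
    ∀ (i i' y : ℕ) (v : V), (FF nx c t)^[m] i ≤ y → y < (FF nx c t)^[m] i' →
      nx^[y] (some t) = some v →
      ∃ z w, i ≤ z ∧ z < i' ∧ nx^[z] (some t) = some w ∧ (psi nx c)^[m] (some v) = some w := by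
  induction m with
  | zero => intro i i' y v h1 h2 h3; exact ⟨y, v, h1, h2, h3, rfl⟩
  | succ m ih =>
    intro i i' y v h1 h2 h3
    rw [Function.iterate_succ_apply'] at h1 h2
    set F := FF nx c t with hF
    have hmono : Monotone F := FF_mono nx c hc t
    have hge : ∀ x, x ≤ F x := fun x => by simp [hF, FF]
    classical
    set x := Nat.findGreatest (fun x => F x ≤ y) y with hx
    have hx1 : F x ≤ y := Nat.findGreatest_spec (P := fun x => F x ≤ y) ((hge _).trans h1) h1
    have hx2 : F^[m] i ≤ x := Nat.le_findGreatest ((hge _).trans h1) h1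
    have hx3 : y < F (x+1) := by
      by_contra hcon
      have : x + 1 ≤ x := Nat.le_findGreatest ((hge _).trans (not_lt.1 hcon)) (not_lt.1 hcon)
      omega
    have hx4 : x < F^[m] i' := by
      by_contra hcon
      have := hmono (not_lt.1 hcon)
      omega
    obtain ⟨w, hw, hr⟩ := rel_step nx c h0 hc1 hx1 hx3 h3
    obtain ⟨z, w', ha, hb, hd, he⟩ := ih i i' x w hx2 hx4 hw
    refine ⟨z, w', ha, hb, hd, ?_⟩
    rw [Function.iterate_succ_apply, psi_eq nx c h0 hinj hc hr, he]

theorem no_infinite [Finite V] (h0 : nx none = none)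
    (hinj : ∀ a b v, nx a = some v → nx b = some v → a = b)
    (hc : ∀ a, c a ≤ c (nx a) + 1) (hc0 : c none = 0) (hc1 : ∀ v, 1 ≤ c (some v))
    (t : V) (s : ℕ) (hst : s < c (some t))
    (hmax : ∀ u, nx (some u) = some t → c (some u) ≤ s + 1)
    (h1 : ∀ m, (FF nx c t)^[m] s < (FF nx c t)^[m] (s+1))
    (h2 : ∀ m, (FF nx c t)^[m] (s+1) < (FF nx c t)^[m+1] 0) : False := by
  obtain ⟨N, hN⟩ := periodic_of_range (psi nx c)
  set F := FF nx c t with hF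
  have hmono : Monotone F := FF_mono nx c hc t
  have hne : ∀ y, F^[N] 0 ≤ y → y < F^[N+1] 0 → ∃ v, nx^[y] (some t) = some v := by
    intro y hy1 hy2
    rw [Function.iterate_succ_apply'] at hy2
    have := c_iter nx c hc (y - F^[N] 0) (nx^[F^[N] 0] (some t))
    rw [← Function.iterate_add_apply, show y - F^[N] 0 + F^[N] 0 = y by omega] at this
    cases hv : nx^[y] (some t) with
    | some v => exact ⟨v, rfl⟩
    | none =>
      rw [hv, hc0] at this
      have e : F (F^[N] 0) = F^[N] 0 + c (nx^[F^[N] 0] (some t)) := rfl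
      omega
  have hs0 : F^[N] 0 ≤ F^[N] s := hmono.iterate N (Nat.zero_le _)
  have h1N := h1 N
  have h2N := h2 N
  obtain ⟨v, hv⟩ := hne (F^[N] s) hs0 (by omega)
  obtain ⟨v', hv'⟩ := hne (F^[N] (s+1)) (by omega) (by omega)
  obtain ⟨z, σ, hz1, hz2, hσ, hpσ⟩ := interval_psi nx c h0 hinj hc hc1 t N s (s+1) _ v le_rfl h1N hv
  obtain rfl : z = s := by omega
  obtain ⟨z', σ', hz1', hz2', hσ', hpσ'⟩ := interval_psi nx c h0 hinj hc hc1 t N (z+1) (F 0) _ v'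
    le_rfl (by rw [← Function.iterate_succ_apply]; exact h2N) hv'
  have hper : some σ ∈ Function.periodicPts (psi nx c) := hpσ ▸ hN (some v)
  have hper' : some σ' ∈ Function.periodicPts (psi nx c) := hpσ' ▸ hN (some v')
  have hw : ∃ w k, RelK nx c σ w k := by
    by_contra hcon
    obtain ⟨n, hn, hp⟩ := hper
    have e : psi nx c (some σ) = none := by simp only [psi, dif_neg hcon]
    have : (psi nx c)^[n] (some σ) = some σ := hp
    rw [show n = (n - 1) + 1 by omega, Function.iterate_succ_apply, e,
      Function.iterate_fixed (by rfl)] at this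
    cases this
  obtain ⟨w, k, hr⟩ := hw
  have hkz : k = z := by
    rcases lt_trichotomy k z with hlt | heq | hgt
    · exfalso
      obtain ⟨hr1, hr2, hr3⟩ := hr
      rw [show z = (k + 1) + (z - k - 1) by omega, Function.iterate_add_apply] at hσ
      have e := nx_iter_inj nx h0 hinj _ _ _ _ hr1 hσ
      have := c_iter nx c hc (z - k - 1) (some t)
      rw [← e] at this
      omega
    · exact heq
    · exfalso
      obtain ⟨hr1, hr2, hr3⟩ := hr
      rw [show k + 1 = z + ((k - z - 1) + 2) by omega, Function.iterate_add_apply] at hr1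
      have e := nx_iter_inj nx h0 hinj _ _ _ _ hσ hr1
      rw [show k - z - 1 + 2 = (1 + (k - z - 1)) + 1 by omega, Function.iterate_succ_apply,
        Function.iterate_add_apply, Function.iterate_one] at e
      have := c_iter nx c hc (k - z - 1) (nx (some w))
      cases hu : nx^[k - z - 1] (nx (some w)) with
      | none => rw [hu, h0] at e; cases e
      | some u =>
        rw [hu] at this e
        have := hmax u e.symm
        omega
  subst hkz
  have hnw : nx (some w) = some t := by
    have := hr.1
    rw [Function.iterate_succ_apply] at this
    exact nx_iter_inj nx h0 hinj _ _ _ _ this hσ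
  have hF0 : F 0 = c (some t) := by simp [hF, FF]
  have hr' : RelK nx c σ' w z' := by
    refine ⟨?_, ?_, ?_⟩
    · rw [Function.iterate_succ_apply, hnw, hσ']
    · have := hr.2.1; omega
    · rw [hnw]; omega
  have hσσ : some σ = some σ' := (Function.bijOn_periodicPts (psi nx c)).injOn hper hper'
    ((psi_eq nx c h0 hinj hc hr).trans (psi_eq nx c h0 hinj hc hr').symm)
  cases hσσ
  have := (relK_unique nx c h0 hinj hc hr hr').2
  omega

theorem main_comb [Finite V] (h0 : nx none = none)
    (hinj : ∀ a b v, nx a = some v → nx b = some v → a = b)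
    (hc : ∀ a, c a ≤ c (nx a) + 1) (hc0 : c none = 0) (hc1 : ∀ v, 1 ≤ c (some v))
    (t : V) (s : ℕ) (hst : s < c (some t))
    (hmax : ∀ u, nx (some u) = some t → c (some u) ≤ s + 1) :
    (∃ n, Odd n ∧ Hit (FF nx c t) s (s+1) n) ∨ (∃ n, Even n ∧ Hit (FF nx c t) 0 (s+1) n) := by
  classical
  have hno := no_infinite nx c h0 hinj hc hc0 hc1 t s hst hmax
  set F := FF nx c t with hF
  have hmono : Monotone F := FF_mono nx c hc t
  have hF0 : s + 1 ≤ F 0 := by simp only [hF, FF, Function.iterate_zero, id]; omega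
  have hle1 : ∀ m, F^[m] s ≤ F^[m] (s+1) := fun m => hmono.iterate m (Nat.le_succ _)
  have hle0 : ∀ m, F^[m] 0 ≤ F^[m] s := fun m => hmono.iterate m (Nat.zero_le _)
  have hle2 : ∀ m, F^[m] (s+1) ≤ F^[m+1] 0 := fun m => hmono.iterate m hF0
  have hex : ∃ m, F^[m] s = F^[m] (s+1) ∨ F^[m] (s+1) = F^[m+1] 0 := by
    by_contra hcon
    push Not at hcon
    exact hno (fun m => lt_of_le_of_ne (hle1 m) (hcon m).1)
      (fun m => lt_of_le_of_ne (hle2 m) (hcon m).2)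
  have hmin := fun k => Nat.find_min (H := hex) (m := k)
  have hspec := Nat.find_spec hex
  set m := Nat.find hex with hm
  have hk1 : ∀ k < m, F^[k] s < F^[k] (s+1) := fun k hk =>
    lt_of_le_of_ne (hle1 k) fun h => hmin k hk (Or.inl h)
  have hk2 : ∀ k < m, F^[k] (s+1) < F^[k+1] 0 := fun k hk =>
    lt_of_le_of_ne (hle2 k) fun h => hmin k hk (Or.inr h)
  by_cases hcase : F^[m] s = F^[m] (s+1)
  · left
    have hm0 : m ≠ 0 := by
      intro h; rw [h] at hcase; simp at hcase
    obtain ⟨m', hm'⟩ := Nat.exists_eq_succ_of_ne_zero hm0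
    refine ⟨2 * m' + 1, ⟨m', rfl⟩, hit_odd F m' _ _ ?_ ?_ ?_⟩
    · intro k hk
      have := hk2 k (by omega)
      have := hle0 (k+1)
      omega
    · intro k hk
      exact (hk1 (k+1) (by omega)).ne
    · rw [hm'] at hcase; exact hcase
  · right
    refine ⟨2 * m, even_two_mul m, hit_even F m _ _ ?_ ?_ ?_⟩
    · intro k hk; exact (hk2 k hk).ne
    · intro k hk
      have := hle0 (k+1)
      have : F^[k+1] s < F^[k+1] (s+1) := by
        rcases Nat.lt_or_ge (k+1) m with h | h
        · exact hk1 _ h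
        · have hkm : k + 1 = m := by omega
          rw [hkm]
          exact lt_of_le_of_ne (hle1 _) hcase
      omega
    · exact hspec.resolve_left hcase

end
end NakComb
set_option linter.all false
set_option linter.unusedSectionVars false
set_option linter.deprecated false

namespace NakMod

variable {A : Type} [Ring A]

/-- uniserial, unbundled -/
def Uni (A : Type) [Ring A] (M : Type) [AddCommGroup M] [Module A M] : Prop :=
  ∀ N₁ N₂ : Submodule A M, N₁ ≤ N₂ ∨ N₂ ≤ N₁

/-- natural-number length -/
def len (A : Type) [Ring A] (M : Type) [AddCommGroup M] [Module A M] : ℕ :=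
  (Module.length A M).toNat

section
variable [IsArtinianRing A]
variable {M : Type} [AddCommGroup M] [Module A M] [Module.Finite A M]
variable {M' : Type} [AddCommGroup M'] [Module A M'] [Module.Finite A M']

theorem coe_len (M : Type) [AddCommGroup M] [Module A M] [Module.Finite A M] :
    ((len A M : ℕ) : ℕ∞) = Module.length A M :=
  ENat.coe_toNat Module.length_ne_top

theorem len_ker (g : M →ₗ[A] M') (hg : Function.Surjective g) :
    len A M = len A (LinearMap.ker g) + len A M' := by
  have := Module.length_eq_add_of_exact (LinearMap.ker g).subtype g
    (Submodule.subtype_injective _) hg (LinearMap.exact_subtype_ker_map g)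
  rw [← coe_len, ← coe_len, ← coe_len] at this
  exact_mod_cast this

theorem len_quot (N : Submodule A M) : len A M = len A N + len A (M ⧸ N) := by
  have := len_ker N.mkQ N.mkQ_surjective
  rwa [Submodule.ker_mkQ] at this

theorem len_le_of_injective (f : M →ₗ[A] M') (hf : Function.Injective f) : len A M ≤ len A M' := by
  have := Module.length_le_of_injective f hf
  rw [← coe_len, ← coe_len] at this
  exact_mod_cast this

theorem len_le_of_surjective (f : M →ₗ[A] M') (hf : Function.Surjective f) :
    len A M' ≤ len A M := by
  have := len_ker f hf; omega

theorem len_congr (e : M ≃ₗ[A] M') : len A M = len A M' := by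
  simp only [len, e.length_eq]

theorem len_lt {N : Submodule A M} (h : N ≠ ⊤) : len A N < len A M := by
  have := Submodule.length_lt h
  rw [← coe_len, ← coe_len] at this
  exact_mod_cast this

theorem len_lt_of_lt {N N' : Submodule A M} (h : N < N') : len A N < len A N' := by
  have h1 : N.comap N'.subtype ≠ ⊤ := by
    intro h2
    rw [Submodule.comap_subtype_eq_top] at h2
    exact absurd h2 (not_le_of_gt h)
  have := len_lt h1
  rwa [len_congr (Submodule.comapSubtypeEquivOfLe h.le)] at this

theorem len_pos_iff : 0 < len A M ↔ Nontrivial M := by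
  rw [← Module.length_pos_iff (R := A), ← coe_len]
  exact_mod_cast Iff.rfl

theorem len_simple [IsSimpleModule A M] : len A M = 1 := by
  have := Module.length_eq_one A M
  rw [← coe_len] at this
  exact_mod_cast this

theorem simple_of_len (h : len A M = 1) : IsSimpleModule A M := by
  rw [← Module.length_eq_one_iff, ← coe_len, h]; rfl

theorem len_coatom {N : Submodule A M} (h : IsCoatom N) : len A M = len A N + 1 := by
  have := isSimpleModule_iff_isCoatom.2 h
  rw [len_quot N, len_simple (M := M ⧸ N)]

theorem exists_coatom [Nontrivial M] : ∃ N : Submodule A M, IsCoatom N := by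
  obtain h | ⟨N, hN, _⟩ := eq_top_or_exists_le_coatom (⊥ : Submodule A M)
  · exact absurd h bot_ne_top
  · exact ⟨N, hN⟩

theorem exists_sub_len (n : ℕ) : ∀ (M : Type) [AddCommGroup M] [Module A M] [Module.Finite A M],
    len A M = n → ∀ k ≤ n, ∃ N : Submodule A M, len A N = k := by
  induction n with
  | zero =>
    intro M _ _ _ hM k hk
    exact ⟨⊤, by rw [len_congr Submodule.topEquiv]; omega⟩
  | succ n ih =>
    intro M _ _ _ hM k hk
    rcases Nat.lt_or_ge k (n+1) with h | h
    · have : Nontrivial M := len_pos_iff (A := A).1 (by omega)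
      obtain ⟨N, hN⟩ := exists_coatom (A := A) (M := M)
      have := len_coatom hN
      obtain ⟨N', hN'⟩ := ih N (by omega) k (by omega)
      refine ⟨N'.map N.subtype, ?_⟩
      rw [← hN']
      exact len_congr (N'.equivMapOfInjective _ N.subtype_injective).symm
    · exact ⟨⊤, by rw [len_congr Submodule.topEquiv]; omega⟩

theorem Uni.le_of_len (h : Uni A M) {N N' : Submodule A M} (hl : len A N ≤ len A N') : N ≤ N' := by
  rcases h N N' with h1 | h1
  · exact h1
  · rcases h1.lt_or_eq with h2 | h2
    · have := len_lt_of_lt h2; omega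
    · exact h2.ge

theorem Uni.eq_of_len (h : Uni A M) {N N' : Submodule A M} (hl : len A N = len A N') : N = N' :=
  le_antisymm (h.le_of_len hl.le) (h.le_of_len hl.ge)

theorem Uni.sub {M : Type} [AddCommGroup M] [Module A M] (h : Uni A M) (N : Submodule A M) :
    Uni A N := by
  intro N₁ N₂
  rw [← Submodule.map_le_map_iff_of_injective N.subtype_injective,
    ← Submodule.map_le_map_iff_of_injective N.subtype_injective]
  exact h _ _

theorem Uni.of_surj {M : Type} [AddCommGroup M] [Module A M]
    {M' : Type} [AddCommGroup M'] [Module A M'] (h : Uni A M) (f : M →ₗ[A] M')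
    (hf : Function.Surjective f) : Uni A M' := by
  intro N₁ N₂
  rw [← Submodule.comap_le_comap_iff_of_surjective hf,
    ← Submodule.comap_le_comap_iff_of_surjective hf]
  exact h _ _

theorem Uni.le_coatom {M : Type} [AddCommGroup M] [Module A M] (h : Uni A M) {K N : Submodule A M}
    (hK : IsCoatom K) (hN : N ≠ ⊤) : N ≤ K := by
  rcases h N K with h1 | h1
  · exact h1
  · rcases h1.lt_or_eq with h2 | h2
    · exact absurd (hK.2 _ h2) hN
    · exact h2.ge

/-- two uniserial surjections onto simple modules agree up to iso -/
theorem Uni.simple_quot {M : Type} [AddCommGroup M] [Module A M] (h : Uni A M)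
    {S S' : Type} [AddCommGroup S] [Module A S] [IsSimpleModule A S]
    [AddCommGroup S'] [Module A S'] [IsSimpleModule A S']
    (f : M →ₗ[A] S) (hf : Function.Surjective f) (f' : M →ₗ[A] S') (hf' : Function.Surjective f') :
    Nonempty (S ≃ₗ[A] S') := by
  have h1 := LinearMap.isCoatom_ker_of_surjective hf
  have h2 := LinearMap.isCoatom_ker_of_surjective hf'
  have e : LinearMap.ker f = LinearMap.ker f' :=
    le_antisymm (h.le_coatom h2 h1.1) (h.le_coatom h1 h2.1)
  exact ⟨(f.quotKerEquivOfSurjective hf).symm ≪≫ₗ Submodule.quotEquivOfEq _ _ e ≪≫ₗ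
    f'.quotKerEquivOfSurjective hf'⟩

/-- a map out of a uniserial module which is injective on a simple submodule is injective -/
theorem Uni.inj_of_simple {M : Type} [AddCommGroup M] [Module A M] (h : Uni A M)
    {M' : Type} [AddCommGroup M'] [Module A M'] {T : Type} [AddCommGroup T] [Module A T]
    [IsSimpleModule A T] (i : T →ₗ[A] M) (hi : Function.Injective i) (f : M →ₗ[A] M')
    (hf : f ∘ₗ i ≠ 0) : Function.Injective f := by
  have hinj : Function.Injective (f ∘ₗ i) := LinearMap.injective_of_ne_zero hf
  rw [← LinearMap.ker_eq_bot]
  rcases h (LinearMap.ker f) (LinearMap.range i) with h1 | h1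
  · rw [eq_bot_iff]
    intro x hx
    obtain ⟨y, rfl⟩ := h1 hx
    have : y = 0 := hinj (by simpa using hx)
    simp [this]
  · exact absurd (LinearMap.ext fun x => by simpa using h1 ⟨x, rfl⟩) hf

end

open ArtinAlg

theorem uni_of_nak (hNak : IsNakayama A) {M : Type} [AddCommGroup M] [Module A M]
    [Module.Finite A M] (h : Nontrivial M)
    (h2 : ∀ N₁ N₂ : Submodule A M, IsCompl N₁ N₂ → N₁ = ⊥ ∨ N₂ = ⊥) : Uni A M :=
  hNak (ModuleCat.of A M) ‹_› ⟨h, h2⟩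

theorem uni_of_soc (hNak : IsNakayama A) {M : Type} [AddCommGroup M] [Module A M]
    [Module.Finite A M] (B : Submodule A M) (hB : B ≠ ⊥) (h : ∀ N : Submodule A M, N ≠ ⊥ → B ≤ N) :
    Uni A M := by
  apply uni_of_nak hNak
  · obtain ⟨x, _, hx⟩ := Submodule.exists_mem_ne_zero_of_ne_bot hB
    exact ⟨x, 0, hx⟩
  · intro N₁ N₂ hc
    by_contra hcon
    push Not at hcon
    exact hB (eq_bot_iff.2 (hc.disjoint (h _ hcon.1) (h _ hcon.2)))

theorem amalgam [IsArtinianRing A] (hNak : IsNakayama A)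
    {M : Type} [AddCommGroup M] [Module A M] [Module.Finite A M] (hM : Uni A M)
    {M' : Type} [AddCommGroup M'] [Module A M'] [Module.Finite A M'] (hM' : Uni A M')
    {T : Type} [AddCommGroup T] [Module A T] [IsSimpleModule A T]
    (i : T →ₗ[A] M) (hi : Function.Injective i) (i' : T →ₗ[A] M') (hi' : Function.Injective i') :
    ∃ (U : Type) (_ : AddCommGroup U) (_ : Module A U), Module.Finite A U ∧ Uni A U ∧
      ∃ (f : M →ₗ[A] U) (f' : M' →ₗ[A] U), Function.Injective f ∧ Function.Injective f' := by
  have hTn : Nontrivial T := IsSimpleModule.nontrivial A T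
  obtain ⟨x0, hx0⟩ := exists_ne (0 : T)
  set j : T →ₗ[A] M × M' := LinearMap.inl A M M' ∘ₗ i with hj
  set d : T →ₗ[A] M × M' := LinearMap.prod i (-i') with hd
  have hjinj : Function.Injective j := LinearMap.inl_injective.comp hi
  let s : Set (Submodule A (M × M')) := {C | LinearMap.range d ≤ C ∧ ∀ x, j x ∈ C → x = 0}
  have hs : s.Nonempty := by
    refine ⟨LinearMap.range d, le_rfl, ?_⟩
    rintro x ⟨y, hy⟩
    have hy1 : i y = i x := congrArg Prod.fst hy
    have hy2 : -(i' y) = 0 := congrArg Prod.snd hy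
    have : y = 0 := hi' (by simpa using hy2)
    subst this
    exact hi (by simpa using hy1.symm)
  obtain ⟨C, hC, hmax⟩ := WellFounded.has_min (wellFounded_gt : WellFounded (α := Submodule A (M × M')) (· > ·)) s hs
  have hCj : C.mkQ ∘ₗ j ≠ 0 := by
    intro h
    apply hx0
    apply hC.2
    have := LinearMap.congr_fun h x0
    simpa using this
  refine ⟨(M × M') ⧸ C, inferInstance, inferInstance, inferInstance, ?_, ?_⟩
  · apply uni_of_soc hNak (LinearMap.range (C.mkQ ∘ₗ j))
    · intro h
      exact hCj (LinearMap.range_eq_bot.1 h)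
    · intro N hN
      have hlt : C < N.comap C.mkQ := by
        refine lt_of_le_of_ne (fun z hz => by
          rw [Submodule.mem_comap, Submodule.mkQ_apply, (Submodule.Quotient.mk_eq_zero C).2 hz]
          exact N.zero_mem) ?_
        intro h
        apply hN
        rw [eq_bot_iff]
        intro y hy
        obtain ⟨z, rfl⟩ := C.mkQ_surjective y
        have : z ∈ C := by rw [h]; exact hy
        simpa using this
      have hnot : N.comap C.mkQ ∉ s := fun h => hmax _ h hlt
      have hex : ∃ x, j x ∈ N.comap C.mkQ ∧ x ≠ 0 := by
        by_contra hcon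
        push Not at hcon
        exact hnot ⟨hC.1.trans hlt.le, hcon⟩
      obtain ⟨x, hx, hx'⟩ := hex
      have htop : N.comap (C.mkQ ∘ₗ j) = ⊤ := by
        refine (eq_bot_or_eq_top _).resolve_left ?_
        intro h
        have : x ∈ N.comap (C.mkQ ∘ₗ j) := hx
        rw [h] at this
        exact hx' (by simpa using this)
      rintro _ ⟨y, rfl⟩
      have : y ∈ N.comap (C.mkQ ∘ₗ j) := by rw [htop]; trivial
      exact this
  · refine ⟨C.mkQ ∘ₗ LinearMap.inl A M M', C.mkQ ∘ₗ LinearMap.inr A M M',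
      hM.inj_of_simple i hi _ hCj, hM'.inj_of_simple i' hi' _ ?_⟩
    have : (C.mkQ ∘ₗ LinearMap.inr A M M') ∘ₗ i' = C.mkQ ∘ₗ j := by
      ext x
      simp only [LinearMap.comp_apply, Submodule.mkQ_apply]
      symm
      rw [Submodule.Quotient.eq]
      apply hC.1
      refine ⟨x, ?_⟩
      simp [hd, hj]
    rw [this]
    exact hCj

end NakMod
namespace NakMod
open ArtinAlg
variable {A : Type} [Ring A]

theorem exists_cover [IsArtinianRing A] (hNak : IsNakayama A)
    (S : Type) [AddCommGroup S] [Module A S] [IsSimpleModule A S] :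
    ∃ P : Submodule A A, Module.Projective A P ∧ Uni A P ∧ Nontrivial P ∧
      ∃ π : P →ₗ[A] S, Function.Surjective π := by
  have hSn : Nontrivial S := IsSimpleModule.nontrivial A S
  obtain ⟨x0, hx0⟩ := exists_ne (0 : S)
  let s : Set (Submodule A A) := {N | Module.Projective A N ∧
    ∃ π : N →ₗ[A] S, Function.Surjective π}
  have hs : s.Nonempty := by
    refine ⟨⊤, Module.Projective.of_equiv (Submodule.topEquiv (R := A) (M := A)).symm,
      LinearMap.toSpanSingleton A S x0 ∘ₗ (Submodule.topEquiv (R := A) (M := A)).toLinearMap, ?_⟩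
    exact (IsSimpleModule.toSpanSingleton_surjective A hx0).comp (LinearEquiv.surjective _)
  obtain ⟨P, ⟨hP, π, hπ⟩, hmin⟩ := WellFounded.has_min
    (wellFounded_lt : WellFounded (α := Submodule A A) (· < ·)) s hs
  have key : ∀ K : Submodule A P, Function.Surjective (π ∘ₗ K.subtype) → K = ⊤ := by
    intro K hK
    obtain ⟨g, hg⟩ := Module.projective_lifting_property (π ∘ₗ K.subtype) π hK
    let G : Module.End A P := K.subtype ∘ₗ g
    have hG : ∀ x, π (G x) = π x := fun x => LinearMap.congr_fun hg x
    have hGn : ∀ n x, π ((G ^ n) x) = π x := by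
      intro n
      induction n with
      | zero => intro x; simp
      | succ n ih =>
        intro x
        rw [pow_succ', Module.End.mul_apply, hG, ih]
    obtain ⟨n, hn, hn1⟩ := ((LinearMap.eventually_isCompl_ker_pow_range_pow G).and
      (Filter.eventually_ge_atTop 1)).exists
    set Q := LinearMap.range (G ^ n) with hQ
    have hQp : Module.Projective A Q := by
      refine Module.Projective.of_split Q.subtype (Submodule.projectionOnto Q _ hn.symm) ?_
      ext x
      simp
    let e := Q.equivMapOfInjective P.subtype P.subtype_injective
    have hmem : Q.map P.subtype ∈ s := by
      refine ⟨Module.Projective.of_equiv e, (π ∘ₗ Q.subtype) ∘ₗ e.symm.toLinearMap, ?_⟩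
      have h1 : Function.Surjective (π ∘ₗ Q.subtype) := by
        intro y
        obtain ⟨x, rfl⟩ := hπ y
        exact ⟨⟨(G ^ n) x, x, rfl⟩, hGn n x⟩
      rw [LinearMap.coe_comp]
      exact h1.comp e.symm.surjective
    have hle : Q.map P.subtype ≤ P := Submodule.map_subtype_le _ _
    have heq : Q.map P.subtype = P := hle.eq_of_not_lt (hmin _ hmem)
    have hQtop : Q = ⊤ := by
      rw [eq_top_iff]
      intro x _
      have : (x : A) ∈ Q.map P.subtype := by rw [heq]; exact x.2
      obtain ⟨y, hy, hyx⟩ := this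
      have : y = x := Subtype.ext hyx
      exact this ▸ hy
    rw [eq_top_iff, ← hQtop, hQ]
    rintro _ ⟨y, rfl⟩
    rw [show n = (n - 1) + 1 by omega, pow_succ', Module.End.mul_apply]
    exact (g _).2
  have hnt : Nontrivial P := hπ.nontrivial
  refine ⟨P, hP, ?_, hnt, π, hπ⟩
  have key2 : ∀ K : Submodule A P, K ≠ ⊤ → K ≤ LinearMap.ker π := by
    intro K hK
    rcases LinearMap.surjective_or_eq_zero (π ∘ₗ K.subtype) with h | h
    · exact absurd (key K h) hK
    · intro x hx
      exact LinearMap.congr_fun h ⟨x, hx⟩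
  apply uni_of_nak hNak hnt
  intro N₁ N₂ hc
  by_contra hcon
  push Not at hcon
  have h1 : N₁ ≠ ⊤ := fun h => hcon.2 (by
    have := hc.disjoint.eq_bot; rwa [h, top_inf_eq] at this)
  have h2 : N₂ ≠ ⊤ := fun h => hcon.1 (by
    have := hc.disjoint.eq_bot; rwa [h, inf_top_eq] at this)
  have h3 : LinearMap.ker π = ⊤ := by
    rw [eq_top_iff, ← hc.sup_eq_top]
    exact sup_le (key2 _ h1) (key2 _ h2)
  obtain ⟨x, hx⟩ := hπ x0
  have : x ∈ LinearMap.ker π := by rw [h3]; trivial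
  exact hx0 (hx ▸ this)

/-- `S` is linked to the `i`-th layer of a composition series of `A`. -/
def Linked (s : CompositionSeries (Submodule A A)) (S : Type) [AddCommGroup S] [Module A S]
    (i : Fin s.length) : Prop :=
  ∃ φ : A →ₗ[A] S, s i.castSucc ≤ LinearMap.ker φ ∧ ¬ s i.succ ≤ LinearMap.ker φ

theorem exists_linked (s : CompositionSeries (Submodule A A)) (hs0 : s.head = ⊥)
    (hs1 : s.last = ⊤) (S : Type) [AddCommGroup S] [Module A S] [IsSimpleModule A S] :
    ∃ i, Linked s S i := by
  have hSn : Nontrivial S := IsSimpleModule.nontrivial A S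
  obtain ⟨x0, hx0⟩ := exists_ne (0 : S)
  by_contra hcon
  simp only [Linked, not_exists, not_and, not_not] at hcon
  have h : ∀ i : Fin (s.length + 1), s i ≤ LinearMap.ker (LinearMap.toSpanSingleton A S x0) := by
    intro i
    induction i using Fin.induction with
    | zero => rw [show s 0 = ⊥ from hs0]; exact bot_le
    | succ i ih => exact hcon i _ ih
  have := h (Fin.last _)
  rw [show s (Fin.last _) = ⊤ from hs1] at this
  have h1 : (1 : A) ∈ LinearMap.ker (LinearMap.toSpanSingleton A S x0) := this trivial
  simp at h1
  exact hx0 h1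

theorem linked_iso (s : CompositionSeries (Submodule A A))
    {S : Type} [AddCommGroup S] [Module A S] [IsSimpleModule A S]
    {S' : Type} [AddCommGroup S'] [Module A S'] [IsSimpleModule A S']
    {i : Fin s.length} (h : Linked s S i) (h' : Linked s S' i) : Nonempty (S ≃ₗ[A] S') := by
  have hcov : s i.castSucc ⋖ s i.succ := s.step i
  have aux : ∀ {S : Type} [AddCommGroup S] [Module A S] [IsSimpleModule A S] (φ : A →ₗ[A] S),
      s i.castSucc ≤ LinearMap.ker φ → ¬ s i.succ ≤ LinearMap.ker φ →
      Function.Surjective (φ ∘ₗ (s i.succ).subtype) ∧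
      LinearMap.ker (φ ∘ₗ (s i.succ).subtype) = (s i.castSucc).comap (s i.succ).subtype := by
    intro S _ _ _ φ h1 h2
    have hsur : Function.Surjective (φ ∘ₗ (s i.succ).subtype) := by
      refine (LinearMap.surjective_or_eq_zero _).resolve_right ?_
      intro h
      exact h2 fun x hx => LinearMap.congr_fun h ⟨x, hx⟩
    refine ⟨hsur, ?_⟩
    have hco : IsCoatom ((s i.castSucc).comap (s i.succ).subtype) := by
      rw [← isSimpleModule_iff_isCoatom]
      exact (covBy_iff_quot_is_simple hcov.le).1 hcov
    have hco2 := LinearMap.isCoatom_ker_of_surjective hsur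
    have hle : (s i.castSucc).comap (s i.succ).subtype ≤ LinearMap.ker (φ ∘ₗ (s i.succ).subtype) :=
      fun x hx => h1 hx
    exact ((hco.le_iff.1 hle).resolve_left hco2.1)
  obtain ⟨φ, h1, h2⟩ := h
  obtain ⟨φ', h1', h2'⟩ := h'
  obtain ⟨a, b⟩ := aux φ h1 h2
  obtain ⟨a', b'⟩ := aux φ' h1' h2'
  exact ⟨(LinearMap.quotKerEquivOfSurjective _ a).symm ≪≫ₗ
    Submodule.quotEquivOfEq _ _ (b.trans b'.symm) ≪≫ₗ LinearMap.quotKerEquivOfSurjective _ a'⟩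

theorem linked_congr (s : CompositionSeries (Submodule A A))
    {S : Type} [AddCommGroup S] [Module A S]
    {S' : Type} [AddCommGroup S'] [Module A S'] (e : S ≃ₗ[A] S')
    {i : Fin s.length} (h : Linked s S i) : Linked s S' i := by
  obtain ⟨φ, h1, h2⟩ := h
  refine ⟨e.toLinearMap ∘ₗ φ, ?_, ?_⟩ <;> rwa [LinearEquiv.ker_comp]

/-- A complete irredundant finite list of indecomposable projectives. -/
structure PData (A : Type) [Ring A] where
  V : Type
  fin : Finite V
  P : V → Type
  grp : ∀ v, AddCommGroup (P v)
  mod : ∀ v, Module A (P v)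
  proj : ∀ v, Module.Projective A (P v)
  fg : ∀ v, Module.Finite A (P v)
  uni : ∀ v, Uni A (P v)
  nt : ∀ v, Nontrivial (P v)
  lab : ∀ v w (h : P v →ₗ[A] P w), Function.Surjective h → v = w
  cover : ∀ (M : Type) [AddCommGroup M] [Module A M] [Module.Finite A M] [Nontrivial M],
    Uni A M → ∃ v, ∃ g : P v →ₗ[A] M, Function.Surjective g

attribute [instance] PData.fin PData.grp PData.mod PData.proj PData.fg PData.nt

theorem exists_pdata [IsArtinianRing A] (hNak : IsNakayama A) : Nonempty (PData A) := by
  obtain ⟨s, hs0, hs1⟩ := exists_compositionSeries_of_isNoetherian_isArtinian A A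
  let V : Type := {i : Fin s.length // ∃ S : ModuleCat.{0} A, IsSimpleModule A S ∧
    IsLeast {i | Linked s S i} i}
  choose S hS hL using fun v : V => v.2
  choose P hP1 hP2 hP3 π hπ using fun v : V => exists_cover hNak (S v)
  refine ⟨{ V := V, fin := inferInstance, P := fun v => P v, grp := inferInstance,
            mod := inferInstance, proj := hP1, fg := inferInstance, uni := hP2, nt := hP3,
            lab := ?_, cover := ?_ }⟩
  · intro v w h hh
    obtain ⟨e⟩ := (hP2 v).simple_quot (π v) (hπ v) (π w ∘ₗ h) ((hπ w).comp hh)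
    have e' : {i | Linked s (S v) i} = {i | Linked s (S w) i} :=
      Set.ext fun i => ⟨linked_congr s e, linked_congr s e.symm⟩
    have h1 := hL v
    rw [e'] at h1
    exact Subtype.ext (h1.unique (hL w))
  · intro M _ _ _ _ hM
    obtain ⟨K, hK⟩ := exists_coatom (A := A) (M := M)
    have hKs : IsSimpleModule A (M ⧸ K) := isSimpleModule_iff_isCoatom.2 hK
    have hne := exists_linked s hs0 hs1 (M ⧸ K)
    obtain ⟨i, hi⟩ : ∃ i, IsLeast {i | Linked s (M ⧸ K) i} i := by
      obtain ⟨i, hi, hi'⟩ := WellFounded.has_min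
        (wellFounded_lt : WellFounded (α := Fin s.length) (· < ·)) {i | Linked s (M ⧸ K) i} hne
      exact ⟨i, hi, fun j hj => not_lt.1 (hi' j hj)⟩
    let v : V := ⟨i, ModuleCat.of A (M ⧸ K), hKs, hi⟩
    obtain ⟨e⟩ := linked_iso s (hL v).1 hi.1
    obtain ⟨g, hg⟩ := Module.projective_lifting_property K.mkQ (e.toLinearMap ∘ₗ π v)
      K.mkQ_surjective
    refine ⟨v, g, ?_⟩
    rw [← LinearMap.range_eq_top]
    by_contra hcon
    have hle := hM.le_coatom hK hcon
    have hz : K.mkQ ∘ₗ g = 0 := by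
      ext x
      simpa using hle ⟨x, rfl⟩
    rw [hg] at hz
    have hMK : Nontrivial (M ⧸ K) := IsSimpleModule.nontrivial A _
    obtain ⟨y, hy⟩ := exists_ne (0 : M ⧸ K)
    obtain ⟨x, rfl⟩ := (e.surjective.comp (hπ v)) y
    exact hy (LinearMap.congr_fun hz x)

end NakMod
namespace NakMod
open ArtinAlg
set_option linter.unusedSectionVars false
variable {A : Type} [Ring A] [IsArtinianRing A]

namespace PData
variable (D : PData A)

/-- The radical of the `v`-th projective. -/
def Rd (v : D.V) : Submodule A (D.P v) := (exists_coatom (A := A) (M := D.P v)).choose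

theorem Rd_coatom (v : D.V) : IsCoatom (D.Rd v) :=
  (exists_coatom (A := A) (M := D.P v)).choose_spec

open Classical in
/-- Label of the radical. -/
def nx1 (v : D.V) : Option D.V :=
  if h : ∃ w, ∃ g : D.P w →ₗ[A] D.Rd v, Function.Surjective g ∧ Nontrivial (D.Rd v)
    then some h.choose else none

/-- Successor function on labels. -/
def nx (a : Option D.V) : Option D.V := a.elim none D.nx1

/-- Length function on labels. -/
def c (a : Option D.V) : ℕ := a.elim 0 fun v => len A (D.P v)

theorem nx_none : D.nx none = none := rfl

theorem c_none : D.c none = 0 := rfl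

theorem c_some (v : D.V) : D.c (some v) = len A (D.P v) := rfl

theorem c_pos (v : D.V) : 1 ≤ D.c (some v) := len_pos_iff.2 (D.nt v)

theorem len_Rd (v : D.V) : D.c (some v) = len A (D.Rd v) + 1 := len_coatom (D.Rd_coatom v)

theorem nx_of_nt (v : D.V) (h : Nontrivial (D.Rd v)) :
    ∃ w, D.nx (some v) = some w ∧ ∃ g : D.P w →ₗ[A] D.Rd v, Function.Surjective g := by
  obtain ⟨w, g, hg⟩ := D.cover (D.Rd v) ((D.uni v).sub _)
  have h' : ∃ w, ∃ g : D.P w →ₗ[A] D.Rd v, Function.Surjective g ∧ Nontrivial (D.Rd v) :=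
    ⟨w, g, hg, h⟩
  refine ⟨h'.choose, ?_, ?_⟩
  · simp only [nx, Option.elim, nx1]
    rw [dif_pos h']
  · obtain ⟨g, hg, _⟩ := h'.choose_spec
    exact ⟨g, hg⟩

theorem nx_some (v w : D.V) (h : D.nx (some v) = some w) : Nontrivial (D.Rd v) := by
  simp only [nx, Option.elim, nx1] at h
  split_ifs at h with h'
  obtain ⟨_, _, _, hn⟩ := h'
  exact hn

theorem c_le (a : Option D.V) : D.c a ≤ D.c (D.nx a) + 1 := by
  cases a with
  | none => simp [c_none]
  | some v =>
    rw [len_Rd]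
    by_cases h : Nontrivial (D.Rd v)
    · obtain ⟨w, hw, g, hg⟩ := D.nx_of_nt v h
      rw [hw, c_some]
      have := len_le_of_surjective g hg
      omega
    · rw [← len_pos_iff (A := A)] at h
      omega

theorem label_unique {M : Type} [AddCommGroup M] [Module A M] [Nontrivial M] {v w : D.V}
    (g : D.P v →ₗ[A] M) (hg : Function.Surjective g)
    (g' : D.P w →ₗ[A] M) (hg' : Function.Surjective g') : v = w := by
  obtain ⟨h, hh⟩ := Module.projective_lifting_property g' g hg'
  refine D.lab v w h ?_
  rw [← LinearMap.range_eq_top]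
  by_contra hcon
  have h1 : ∀ x : D.P w, ∃ y ∈ LinearMap.range h, x - y ∈ LinearMap.ker g' := by
    intro x
    obtain ⟨z, hz⟩ := hg (g' x)
    refine ⟨h z, ⟨z, rfl⟩, ?_⟩
    have := LinearMap.congr_fun hh z
    simp only [LinearMap.comp_apply] at this
    rw [LinearMap.mem_ker, map_sub, this, hz, sub_self]
  rcases D.uni w (LinearMap.range h) (LinearMap.ker g') with h2 | h2
  · obtain ⟨y, hy⟩ := exists_ne (0 : M)
    obtain ⟨x, rfl⟩ := hg' y
    obtain ⟨z, hz, hxz⟩ := h1 x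
    apply hy
    have := (LinearMap.ker g').add_mem hxz (h2 hz)
    simpa using this
  · apply hcon
    rw [eq_top_iff]
    intro x _
    obtain ⟨z, hz, hxz⟩ := h1 x
    have := (LinearMap.range h).add_mem (h2 hxz) hz
    simpa using this

theorem link (k : ℕ) : ∀ (v : D.V) (M : Type) [AddCommGroup M] [Module A M] [Module.Finite A M]
    (g : D.P v →ₗ[A] M) (_ : Function.Surjective g) (N : Submodule A M)
    (_ : len A N + k = len A M) (_ : 0 < len A N),
    ∃ w, D.nx^[k] (some v) = some w ∧ ∃ g' : D.P w →ₗ[A] N, Function.Surjective g' := by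
  induction k with
  | zero =>
    intro v M _ _ _ g hg N hN hpos
    have hNt : N = ⊤ := by
      by_contra h
      have := len_lt h
      omega
    subst hNt
    exact ⟨v, rfl, Submodule.topEquiv.symm.toLinearMap ∘ₗ g,
      (LinearEquiv.surjective (Submodule.topEquiv (R := A) (M := M)).symm).comp hg⟩
  | succ k ih =>
    intro v M _ _ _ g hg N hN hpos
    have hM : Uni A M := (D.uni v).of_surj g hg
    have hNt : N ≠ ⊤ := by
      rintro rfl
      have := len_congr (Submodule.topEquiv (R := A) (M := M))
      omega
    have hMn : Nontrivial M := by rw [← len_pos_iff (A := A)]; omega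
    obtain ⟨K, hK⟩ := exists_coatom (A := A) (M := M)
    have hKR : K.comap g = D.Rd v := by
      have h1 : IsCoatom (K.comap g) := by
        have hs : IsSimpleModule A (M ⧸ K) := isSimpleModule_iff_isCoatom.2 hK
        have := LinearMap.isCoatom_ker_of_surjective (f := K.mkQ ∘ₗ g)
          (K.mkQ_surjective.comp hg)
        rwa [LinearMap.ker_comp, Submodule.ker_mkQ] at this
      exact le_antisymm ((D.uni v).le_coatom (D.Rd_coatom v) h1.1)
        ((D.uni v).le_coatom h1 (D.Rd_coatom v).1)
    have hNK : N ≤ K := hM.le_coatom hK hNt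
    have hKlen := len_coatom hK
    -- the restricted map
    have hmem : ∀ x : D.Rd v, (g ∘ₗ (D.Rd v).subtype) x ∈ K := by
      intro x
      have : (x : D.P v) ∈ K.comap g := by rw [hKR]; exact x.2
      exact this
    let r : D.Rd v →ₗ[A] K := LinearMap.codRestrict K (g ∘ₗ (D.Rd v).subtype) hmem
    have hr : Function.Surjective r := by
      rintro ⟨y, hy⟩
      obtain ⟨x, rfl⟩ := hg y
      refine ⟨⟨x, by rw [← hKR]; exact hy⟩, rfl⟩
    have hNN : len A (N.comap K.subtype) = len A N :=
      len_congr (Submodule.comapSubtypeEquivOfLe hNK)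
    have hRn : Nontrivial (D.Rd v) := by
      have := len_le_of_surjective r hr
      rw [← len_pos_iff (A := A)]; omega
    obtain ⟨w1, hw1, g1, hg1⟩ := D.nx_of_nt v hRn
    obtain ⟨w, hw, g', hg'⟩ := ih w1 K (r ∘ₗ g1) (hr.comp hg1) (N.comap K.subtype)
      (by omega) (by omega)
    refine ⟨w, ?_, (Submodule.comapSubtypeEquivOfLe hNK).toLinearMap ∘ₗ g', ?_⟩
    · rw [Function.iterate_succ_apply, hw1, hw]
    · exact (LinearEquiv.surjective (Submodule.comapSubtypeEquivOfLe hNK)).comp hg'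

theorem link_quot (k : ℕ) (v w : D.V) (h : D.nx^[k] (some v) = some w)
    (hk : k + 1 ≤ len A (D.P v)) :
    ∃ (K : Submodule A (D.P v)) (B : Submodule A (D.P v ⧸ K)), len A (D.P v ⧸ K) = k + 1 ∧
      len A B = 1 ∧ ∃ g : D.P w →ₗ[A] B, Function.Surjective g := by
  obtain ⟨K, hK⟩ := exists_sub_len (A := A) _ (D.P v) rfl (len A (D.P v) - (k + 1)) (by omega)
  have h1 := len_quot K
  have h2 : len A (D.P v ⧸ K) = k + 1 := by omega
  obtain ⟨B, hB⟩ := exists_sub_len (A := A) _ (D.P v ⧸ K) rfl 1 (by omega)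
  obtain ⟨w', hw', g, hg⟩ := D.link k v _ K.mkQ K.mkQ_surjective B (by omega) (by omega)
  rw [h] at hw'
  obtain rfl := Option.some_injective _ hw'
  exact ⟨K, B, h2, hB, g, hg⟩

theorem nx_inj (hNak : IsNakayama A) (a b : Option D.V) (v : D.V) (ha : D.nx a = some v)
    (hb : D.nx b = some v) : a = b := by
  cases a with
  | none => cases ha
  | some u =>
  cases b with
  | none => cases hb
  | some u' =>
  have hl : ∀ u, D.nx (some u) = some v → 1 + 1 ≤ len A (D.P u) := by
    intro u hu
    have h1 := D.nx_some _ _ hu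
    rw [← len_pos_iff (A := A)] at h1
    have h2 := D.len_Rd u
    rw [c_some] at h2
    omega
  obtain ⟨K, B, hK, hB, g, hg⟩ := D.link_quot 1 u v ha (hl u ha)
  obtain ⟨K', B', hK', hB', g', hg'⟩ := D.link_quot 1 u' v hb (hl u' hb)
  have hs := simple_of_len hB
  have hs' := simple_of_len hB'
  obtain ⟨e⟩ := (D.uni v).simple_quot g hg g' hg'
  have hU1 : Uni A (D.P u ⧸ K) := (D.uni u).of_surj _ K.mkQ_surjective
  have hU2 : Uni A (D.P u' ⧸ K') := (D.uni u').of_surj _ K'.mkQ_surjective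
  obtain ⟨U, _, _, hUf, hU, f, f', hf, hf'⟩ := amalgam hNak hU1 hU2 B.subtype B.subtype_injective
    (B'.subtype ∘ₗ e.toLinearMap) (B'.subtype_injective.comp e.injective)
  have e1 := LinearEquiv.ofInjective f hf
  have e2 := LinearEquiv.ofInjective f' hf'
  have hr : LinearMap.range f = LinearMap.range f' := by
    apply hU.eq_of_len
    rw [← len_congr e1, ← len_congr e2, hK, hK']
  let e3 := e1 ≪≫ₗ LinearEquiv.ofEq _ _ hr ≪≫ₗ e2.symm
  have : Nontrivial (D.P u' ⧸ K') := by rw [← len_pos_iff (A := A)]; omega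
  exact congrArg some (D.label_unique (e3.toLinearMap ∘ₗ K.mkQ)
    (e3.surjective.comp K.mkQ_surjective) K'.mkQ K'.mkQ_surjective)

end PData

end NakMod
namespace NakMod
open ArtinAlg
variable {A : Type} [Ring A]

theorem projDimLE_iff (n : ℕ) : ∀ M : ModuleCat.{0} A,
    ProjDimLE A n M ↔ HasProjectiveDimensionLT M (n + 1) := by
  induction n with
  | zero =>
    intro M
    rw [← projective_iff_hasProjectiveDimensionLT_one]
    exact ⟨fun h => by cases h; assumption, fun h => .zero M h⟩
  | succ n ih =>
    intro M
    have key : ∀ (P : ModuleCat.{0} A) (f : P ⟶ M), Projective P → Epi f →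
        (HasProjectiveDimensionLT M (n + 2) ↔ HasProjectiveDimensionLT (kernel f) (n + 1)) := by
      intro P f hP hf
      have hS : (ShortComplex.mk (kernel.ι f) f (kernel.condition f)).ShortExact :=
        { exact := ShortComplex.exact_kernel f }
      exact hS.hasProjectiveDimensionLT_X₃_iff n hP
    constructor
    · intro h
      cases h with
      | succ _ _ P f hP hf h => exact (key P f hP hf).2 ((ih _).1 h)
    · intro h
      exact .succ n M (Projective.over M) (Projective.π M) inferInstance inferInstance
        ((ih _).2 ((key _ _ inferInstance inferInstance).1 h))

theorem projDim_eq (n : ℕ) (M : ModuleCat.{0} A) (h : HasProjectiveDimensionLT M (n + 1))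
    (h' : ¬ HasProjectiveDimensionLT M n) : projDim A M = n := by
  apply le_antisymm
  · exact sInf_le ⟨n, rfl, (projDimLE_iff n M).2 h⟩
  · refine le_sInf ?_
    rintro _ ⟨m, rfl, hm⟩
    rw [projDimLE_iff] at hm
    by_contra hcon
    have hlt : m < n := by
      have := not_le.1 hcon
      exact_mod_cast this
    exact h' (hasProjectiveDimensionLT_of_ge M (m + 1) n hlt)

theorem pd_ker {P : Type} [AddCommGroup P] [Module A P] [hP : Module.Projective A P]
    {M : Type} [AddCommGroup M] [Module A M] (g : P →ₗ[A] M) (hg : Function.Surjective g) (n : ℕ) :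
    HasProjectiveDimensionLT (ModuleCat.of A M) (n + 2) ↔
      HasProjectiveDimensionLT (ModuleCat.of A (LinearMap.ker g)) (n + 1) :=
  (LinearMap.shortExact_shortComplexKer hg).hasProjectiveDimensionLT_X₃_iff n
    ((IsProjective.iff_projective P).1 hP)

theorem pd_one {M : Type} [AddCommGroup M] [Module A M] :
    HasProjectiveDimensionLT (ModuleCat.of A M) 1 ↔ Module.Projective A M := by
  rw [← projective_iff_hasProjectiveDimensionLT_one, ← IsProjective.iff_projective]

theorem pd_zero {M : Type} [AddCommGroup M] [Module A M] :
    HasProjectiveDimensionLT (ModuleCat.of A M) 0 ↔ Subsingleton M := by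
  rw [hasProjectiveDimensionLT_zero_iff_isZero, ModuleCat.isZero_iff_subsingleton]

variable [IsArtinianRing A]

theorem ker_of_proj {P : Type} [AddCommGroup P] [Module A P] (hP : Uni A P)
    {M : Type} [AddCommGroup M] [Module A M] [Nontrivial M] [Module.Projective A M]
    (g : P →ₗ[A] M) (hg : Function.Surjective g) : LinearMap.ker g = ⊥ := by
  obtain ⟨h, hh⟩ := Module.projective_lifting_property g LinearMap.id hg
  have hh' : ∀ x, g (h x) = x := fun x => LinearMap.congr_fun hh x
  rcases hP (LinearMap.ker g) (LinearMap.range h) with h1 | h1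
  · rw [eq_bot_iff]
    intro x hx
    obtain ⟨y, rfl⟩ := h1 hx
    rw [LinearMap.mem_ker, hh'] at hx
    subst hx
    simp
  · exfalso
    obtain ⟨y, hy⟩ := exists_ne (0 : M)
    have := h1 ⟨y, rfl⟩
    rw [LinearMap.mem_ker, hh'] at this
    exact hy this

theorem pd_hit (D : PData A) (t : D.V) (n : ℕ) : ∀ (i j : ℕ) (v : D.V) (M : Type) [AddCommGroup M]
    [Module A M] [Module.Finite A M] (g : D.P v →ₗ[A] M) (_ : Function.Surjective g)
    (_ : D.nx^[i] (some t) = some v) (_ : len A M + i = j) (_ : i < j)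
    (_ : NakComb.Hit (NakComb.FF D.nx D.c t) i j n),
    HasProjectiveDimensionLT (ModuleCat.of A M) (n + 1) ∧
      ¬ HasProjectiveDimensionLT (ModuleCat.of A M) n := by
  induction n with
  | zero =>
    intro i j v M _ _ _ g hg hv hl hij hH
    have hMn : Nontrivial M := by rw [← len_pos_iff (A := A)]; omega
    have hH : j = i + D.c (D.nx^[i] (some t)) := hH
    rw [hv, PData.c_some] at hH
    have h1 := len_ker g hg
    have h2 : len A (LinearMap.ker g) = 0 := by omega
    have h3 : LinearMap.ker g = ⊥ := by
      have h4 : ¬ Nontrivial (LinearMap.ker g) := by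
        rw [← len_pos_iff (A := A)]; omega
      rwa [Submodule.nontrivial_iff_ne_bot, not_not] at h4
    constructor
    · rw [zero_add, pd_one]
      exact Module.Projective.of_equiv
        (LinearEquiv.ofBijective g ⟨LinearMap.ker_eq_bot.1 h3, hg⟩)
    · rw [pd_zero]
      exact not_subsingleton M
  | succ n ih =>
    intro i j v M _ _ _ g hg hv hl hij hH
    have hMn : Nontrivial M := by rw [← len_pos_iff (A := A)]; omega
    obtain ⟨hne, hH⟩ := hH
    have hF : NakComb.FF D.nx D.c t i = i + len A (D.P v) := by
      simp only [NakComb.FF, hv, PData.c_some]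
    rw [hF] at hne hH
    have h1 := len_ker g hg
    have hpos : 0 < len A (LinearMap.ker g) := by omega
    obtain ⟨w, hw, g', hg'⟩ := D.link (len A M) v (D.P v) LinearMap.id Function.surjective_id
      (LinearMap.ker g) (by omega) hpos
    have hw' : D.nx^[j] (some t) = some w := by
      rw [← hl, Function.iterate_add_apply, hv, hw]
    obtain ⟨a, b⟩ := ih j _ w (LinearMap.ker g) g' hg' hw' (by omega) (by omega) hH
    refine ⟨(pd_ker g hg n).2 a, ?_⟩
    cases n with
    | zero =>
      rw [zero_add, pd_one]
      intro hp
      have := ker_of_proj (D.uni v) g hg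
      have h5 := len_pos_iff.1 hpos
      rw [Submodule.nontrivial_iff_ne_bot] at h5
      exact h5 this
    | succ n => rwa [pd_ker g hg n]

/-- All that is needed about the injective envelope of a simple module. -/
theorem env_uni (hNak : IsNakayama A) {S J : Type} [AddCommGroup S] [Module A S]
    [IsSimpleModule A S] [AddCommGroup J] [Module A J] (e : S →ₗ[A] J)
    (he : Function.Injective e)
    (hess : ∀ N : Submodule A J, Function.Injective (N.mkQ ∘ₗ e) → N = ⊥) :
    Uni A J ∧ Module.Finite A J := by
  have hSn : Nontrivial S := IsSimpleModule.nontrivial A S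
  obtain ⟨x0, hx0⟩ := exists_ne (0 : S)
  have hex0 : e x0 ≠ 0 := fun h => hx0 (he (by rw [h, map_zero]))
  have hsoc : ∀ N : Submodule A J, N ≠ ⊥ → LinearMap.range e ≤ N := by
    intro N hN
    rcases LinearMap.injective_or_eq_zero (N.mkQ ∘ₗ e) with h | h
    · exact absurd (hess N h) hN
    · rintro _ ⟨x, rfl⟩
      have := LinearMap.congr_fun h x
      simpa using this
  have hfg : ∀ N : Submodule A J, N.FG → N ≠ ⊥ → Uni A N := by
    intro N hNf hN
    have : Module.Finite A N := Module.Finite.iff_fg.2 hNf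
    refine uni_of_soc hNak ((LinearMap.range e).comap N.subtype) ?_ ?_
    · intro h
      have : (⟨e x0, hsoc N hN ⟨x0, rfl⟩⟩ : N) ∈ (LinearMap.range e).comap N.subtype := ⟨x0, rfl⟩
      rw [h, Submodule.mem_bot] at this
      exact hex0 (congrArg Subtype.val this)
    · intro L hL x hx
      have h1 : L.map N.subtype ≠ ⊥ := by
        intro h1
        apply hL
        apply Submodule.map_injective_of_injective N.subtype_injective
        rw [h1, Submodule.map_bot]
      obtain ⟨y, hy, hyx⟩ := hsoc _ h1 hx
      have : y = x := Subtype.ext hyx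
      exact this ▸ hy
  have hpair : ∀ x y : J, x ∈ Submodule.span A {y} ∨ y ∈ Submodule.span A {x} := by
    intro x y
    by_cases h0 : Submodule.span A {x, y} = ⊥
    · left
      rw [Submodule.span_eq_bot] at h0
      rw [h0 x (by simp)]; exact zero_mem _
    · have hx : x ∈ Submodule.span A {x, y} := Submodule.subset_span (by simp)
      have hy : y ∈ Submodule.span A {x, y} := Submodule.subset_span (by simp)
      have hU := hfg _ (Submodule.fg_span (by simp)) h0
      rcases hU (Submodule.span A {⟨x, hx⟩}) (Submodule.span A {⟨y, hy⟩}) with h | h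
      · left
        obtain ⟨a, ha⟩ := Submodule.mem_span_singleton.1 (h (Submodule.mem_span_singleton_self _))
        exact Submodule.mem_span_singleton.2 ⟨a, congrArg Subtype.val ha⟩
      · right
        obtain ⟨a, ha⟩ := Submodule.mem_span_singleton.1 (h (Submodule.mem_span_singleton_self _))
        exact Submodule.mem_span_singleton.2 ⟨a, congrArg Subtype.val ha⟩
  have hUJ : Uni A J := by
    intro N₁ N₂
    by_contra hcon
    push Not at hcon
    obtain ⟨⟨x, hx, hx'⟩, ⟨y, hy, hy'⟩⟩ := And.intro (SetLike.not_le_iff_exists.1 hcon.1)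
      (SetLike.not_le_iff_exists.1 hcon.2)
    rcases hpair x y with h | h
    · exact hx' ((Submodule.span_singleton_le_iff_mem _ _).2 hy h)
    · exact hy' ((Submodule.span_singleton_le_iff_mem _ _).2 hx h)
  refine ⟨hUJ, ?_⟩
  -- choose a cyclic submodule of maximal length
  have hbd : ∀ x : J, len A (Submodule.span A {x}) ≤ len A A := by
    intro x
    refine len_le_of_surjective
      (LinearMap.codRestrict (Submodule.span A {x}) (LinearMap.toSpanSingleton A J x)
        fun a => Submodule.mem_span_singleton.2 ⟨a, rfl⟩) ?_
    rintro ⟨y, hy⟩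
    obtain ⟨a, rfl⟩ := Submodule.mem_span_singleton.1 hy
    exact ⟨a, rfl⟩
  obtain ⟨x, hx⟩ : ∃ x : J, ∀ y : J,
      len A (Submodule.span A {y}) ≤ len A (Submodule.span A {x}) := by
    have hfin : (Set.range fun x : J => len A (Submodule.span A {x})).Finite :=
      (Set.finite_Iic (len A A)).subset (by rintro _ ⟨x, rfl⟩; exact hbd x)
    obtain ⟨m, ⟨x, rfl⟩, hm⟩ := hfin.exists_maximal (Set.range_nonempty _)
    refine ⟨x, fun y => ?_⟩
    rcases le_total (len A (Submodule.span A {y})) (len A (Submodule.span A {x})) with h | h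
    · exact h
    · exact hm ⟨y, rfl⟩ h
  refine ⟨⟨{x}, ?_⟩⟩
  rw [Finset.coe_singleton, eq_top_iff]
  intro y _
  rcases hpair x y with h | h
  · have hle : Submodule.span A {x} ≤ Submodule.span A {y} :=
      (Submodule.span_singleton_le_iff_mem _ _).2 h
    rcases hle.lt_or_eq with h1 | h1
    · have h2 : (Submodule.span A {x}).comap (Submodule.span A {y}).subtype ≠ ⊤ := by
        intro h2
        rw [Submodule.comap_subtype_eq_top] at h2
        exact absurd h2 (not_le_of_gt h1)
      have h3 := len_lt h2
      rw [len_congr (Submodule.comapSubtypeEquivOfLe h1.le)] at h3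
      exact absurd (hx y) (not_le_of_gt h3)
    · rw [h1]; exact Submodule.mem_span_singleton_self y
  · exact h

theorem main_mod (hNak : IsNakayama A) {S J : Type} [AddCommGroup S] [Module A S]
    [IsSimpleModule A S] [AddCommGroup J] [Module A J] (hJ : Module.Injective A J)
    (e : S →ₗ[A] J) (he : Function.Injective e)
    (hess : ∀ N : Submodule A J, Function.Injective (N.mkQ ∘ₗ e) → N = ⊥) :
    (∃ n : ℕ, projDim A (ModuleCat.of A S) = n ∧ Odd n) ∨
      (∃ n : ℕ, projDim A (ModuleCat.of A J) = n ∧ Even n) := by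
  obtain ⟨hU, hfin⟩ := env_uni hNak e he hess
  obtain ⟨D⟩ := exists_pdata hNak
  have hSn : Nontrivial S := IsSimpleModule.nontrivial A S
  have hJn : Nontrivial J := he.nontrivial
  obtain ⟨t, g, hg⟩ := D.cover J hU
  have e0 := LinearEquiv.ofInjective e he
  have hB : len A (LinearMap.range e) = 1 := by
    have h1 : Module.Finite A S := Module.Finite.equiv e0.symm
    rw [← len_congr e0]; exact len_simple
  have hfS : Module.Finite A S := Module.Finite.equiv e0.symm
  have hJpos : 0 < len A J := len_pos_iff.2 hJn
  obtain ⟨s, hs⟩ : ∃ s, len A J = s + 1 := ⟨len A J - 1, by omega⟩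
  obtain ⟨σ, hσ, g', hg'⟩ := D.link s t J g hg (LinearMap.range e) (by omega) (by omega)
  let q : D.P σ →ₗ[A] S := e0.symm.toLinearMap ∘ₗ g'
  have hq : Function.Surjective q := e0.symm.surjective.comp hg'
  have hst : s < D.c (some t) := by
    have := len_le_of_surjective g hg
    rw [PData.c_some]; omega
  have hmax : ∀ u, D.nx (some u) = some t → D.c (some u) ≤ s + 1 := by
    intro u hu
    by_contra hcon
    have hu' : D.nx^[s + 1] (some u) = some σ := by
      rw [Function.iterate_succ_apply, hu, hσ]
    rw [PData.c_some] at hcon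
    obtain ⟨K, B, hK, hB, p, hp⟩ := D.link_quot (s + 1) u σ hu' (by omega)
    have hBs := simple_of_len hB
    obtain ⟨e1⟩ := (D.uni σ).simple_quot p hp q hq
    obtain ⟨f, hf⟩ := hJ.out B.subtype B.subtype_injective (e ∘ₗ e1.toLinearMap)
    have hUq : Uni A (D.P u ⧸ K) := (D.uni u).of_surj _ K.mkQ_surjective
    have hinj : Function.Injective f := by
      refine hUq.inj_of_simple B.subtype B.subtype_injective f ?_
      intro h0
      obtain ⟨x, hx⟩ := exists_ne (0 : S)
      apply hx
      apply he
      have h1 := LinearMap.congr_fun h0 (e1.symm x)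
      have h2 := hf (e1.symm x)
      simp only [LinearMap.comp_apply, LinearMap.zero_apply] at h1
      rw [h1] at h2
      simpa using h2.symm
    have := len_le_of_injective f hinj
    omega
  rcases NakComb.main_comb D.nx D.c D.nx_none (D.nx_inj hNak) D.c_le D.c_none D.c_pos t s hst hmax
    with ⟨n, hn, hH⟩ | ⟨n, hn, hH⟩
  · left
    obtain ⟨a, b⟩ := pd_hit D t n s (s + 1) σ S q hq hσ (by rw [len_simple]; omega) (by omega) hH
    exact ⟨n, projDim_eq n _ a b, hn⟩
  · right
    obtain ⟨a, b⟩ := pd_hit D t n 0 (s + 1) t J g hg rfl (by omega) (by omega) hH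
    exact ⟨n, projDim_eq n _ a b, hn⟩

end NakMod
open ArtinAlg in
/-- Let `A` be a Nakayama algebra and `S` a simple module. Then `pd S`
is finite and odd, or `pd (I S)` is finite and even; in particular at least one of
`S` and `I S` has finite projective dimension. -/
theorem statement_9 (R : Type) [CommRing R] [IsArtinianRing R]
    (A : Type) [Ring A] [Algebra R A] [Module.Finite R A]
    (hNak : IsNakayama A)
    (S : ModuleCat.{0} A) (hS : IsSimpleModule A ↥S)
    (I : ModuleCat.{0} A) (hI : IsInjEnvOf A S I) :
    (∃ n : ℕ, projDim A S = n ∧ Odd n) ∨ (∃ n : ℕ, projDim A I = n ∧ Even n) := by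
  have : IsArtinianRing A := IsArtinianRing.of_finite R A
  obtain ⟨f, hinj, hmono, hess⟩ := hI
  refine NakMod.main_mod hNak ?_ f.hom ((ModuleCat.mono_iff_injective f).1 hmono) ?_
  · exact (Module.injective_iff_injective_object A I).2 hinj
  · intro N hN
    have h1 := hess (ModuleCat.of A (I ⧸ N)) (ModuleCat.ofHom N.mkQ)
      ((ModuleCat.mono_iff_injective _).2 hN)
    have h2 := (ModuleCat.mono_iff_injective _).1 h1
    have h3 : LinearMap.ker N.mkQ = ⊥ := LinearMap.ker_eq_bot.2 h2
    rwa [Submodule.ker_mkQ] at h3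
end
end

section
/- Let A be a Nakayama algebra and S a simple module. If e(S) = 2t, then h(S) = γ^t(φ(S)), where φ(S) = top(IS); if e(S) = 2t+1, then h(S) = γ^t(τ S). -/
open CategoryTheory CategoryTheory.Limits

noncomputable section

namespace NakAux

open ArtinAlg

section ModuleLevel

variable {A : Type} [Ring A]
variable {M N P X Y Z E S : Type} [AddCommGroup M] [Module A M] [AddCommGroup N] [Module A N]
  [AddCommGroup P] [Module A P] [AddCommGroup X] [Module A X] [AddCommGroup Y] [Module A Y]
  [AddCommGroup Z] [Module A Z] [AddCommGroup E] [Module A E] [AddCommGroup S] [Module A S]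

/-- Unbundled version of uniseriality. -/
def US (A M : Type) [Ring A] [AddCommGroup M] [Module A M] : Prop :=
  ∀ N₁ N₂ : Submodule A M, N₁ ≤ N₂ ∨ N₂ ≤ N₁

theorem US.of_injective (hM : US A M) (f : N →ₗ[A] M) (hf : Function.Injective f) : US A N :=
  fun a b => (hM (a.map f) (b.map f)).imp
    (Submodule.map_le_map_iff_of_injective hf _ _).1
    (Submodule.map_le_map_iff_of_injective hf _ _).1

theorem US.of_surjective (hM : US A M) (f : M →ₗ[A] N) (hf : Function.Surjective f) : US A N :=
  fun a b => (hM (a.comap f) (b.comap f)).imp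
    (Submodule.comap_le_comap_iff_of_surjective hf).1
    (Submodule.comap_le_comap_iff_of_surjective hf).1

theorem US.eq_top (hM : US A M) {L K : Submodule A M} (hL : IsCoatom L) (h : ¬ K ≤ L) :
    K = ⊤ := by
  have h1 : L ≤ K := (hM K L).resolve_left h
  exact hL.2 K (lt_of_le_of_ne h1 (fun e => h (e ▸ le_refl _)))

theorem US.eq_top' (hM : US A M) [IsSimpleModule A S] (f : M →ₗ[A] S) {K : Submodule A M}
    (h : K.map f ≠ ⊥) : K = ⊤ := by
  have hf : f ≠ 0 := by
    rintro rfl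
    exact h (by simp)
  refine hM.eq_top (LinearMap.isCoatom_ker_of_surjective (LinearMap.surjective_of_ne_zero hf)) ?_
  intro hK
  exact h ((Submodule.map_le_iff_le_comap.2 hK).antisymm bot_le |>.trans (by simp))

theorem US.surj_of_comp (hM : US A M) [IsSimpleModule A S] (f : M →ₗ[A] S) (p : P →ₗ[A] M)
    (h : f ∘ₗ p ≠ 0) : Function.Surjective p := by
  rw [← LinearMap.range_eq_top]
  apply hM.eq_top' f
  rwa [← LinearMap.range_comp, Ne, LinearMap.range_eq_bot]

theorem exists_factor (f : X →ₗ[A] Y) (hf : Function.Surjective f) (g : X →ₗ[A] Z)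
    (h : LinearMap.ker f ≤ LinearMap.ker g) : ∃ k : Y →ₗ[A] Z, k ∘ₗ f = g := by
  refine ⟨(LinearMap.ker f).liftQ g h ∘ₗ (f.quotKerEquivOfSurjective hf).symm.toLinearMap, ?_⟩
  ext x
  have : (f.quotKerEquivOfSurjective hf).symm (f x) = Submodule.Quotient.mk x := by
    rw [LinearEquiv.symm_apply_eq]; rfl
  simp [this]

theorem nak (hNak : IsNakayama A) [Module.Finite A M] [Nontrivial M]
    (h : ∀ (N₁ N₂ : Submodule A M), IsCompl N₁ N₂ → N₁ = ⊥ ∨ N₂ = ⊥) : US A M :=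
  hNak (ModuleCat.of A M) ‹_› ⟨‹_›, h⟩

theorem jac_le [IsArtinianRing A] :
    Module.jacobson A M ≤ Ring.jacobson A • (⊤ : Submodule A M) := by
  apply Module.jacobson_le_of_eq_bot
  have h : Module.IsTorsionBySet A (M ⧸ Ring.jacobson A • (⊤ : Submodule A M))
      (Ring.jacobson A) := by
    rw [Module.isTorsionBySet_quotient_iff]
    exact fun m i hi => Submodule.smul_mem_smul hi trivial
  let _ := h.module
  have := (h.semilinearMap.isSemisimpleModule_iff_of_bijective Function.bijective_id).2
      inferInstance
  exact IsSemisimpleModule.jacobson_eq_bot A _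

/-- Over an artinian ring, nonzero modules have maximal submodules. -/
theorem exists_coatom [IsArtinianRing A] [Nontrivial M] : ∃ L : Submodule A M, IsCoatom L := by
  by_contra hcon
  push Not at hcon
  have h1 : Module.jacobson A M = ⊤ := by
    rw [Module.jacobson, sInf_eq_top]
    exact fun L hL => (hcon L hL).elim
  have h2 : Ring.jacobson A • (⊤ : Submodule A M) = ⊤ := top_le_iff.1 (h1.ge.trans jac_le)
  have hp : IsSemiprimaryRing A := inferInstance
  obtain ⟨n, hn⟩ := hp.isNilpotent
  have h3 : ∀ k, (Ring.jacobson A) ^ k • (⊤ : Submodule A M) = ⊤ := by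
    intro k
    induction k with
    | zero => rw [Submodule.pow_zero, Ideal.one_eq_top, Submodule.top_smul]
    | succ k ih => rw [Submodule.pow_succ, Submodule.mul_smul, h2, ih]
  have := h3 n
  rw [hn] at this
  simp at this

theorem US.finite [IsArtinianRing A] (hM : US A M) : Module.Finite A M := by
  rcases subsingleton_or_nontrivial M with h | h
  · infer_instance
  obtain ⟨L, hL⟩ := exists_coatom (A := A) (M := M)
  obtain ⟨x, hx⟩ : ∃ x, x ∉ L := by
    by_contra hc
    push Not at hc
    exact hL.1 (eq_top_iff.2 fun x _ => hc x)
  have := hM.eq_top (K := Submodule.span A {x}) hL (by simpa using hx)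
  exact ⟨⟨{x}, by simpa using this⟩⟩

theorem US.exists_top [IsArtinianRing A] (_hM : US A M) [Nontrivial M] :
    ∃ (T : Type) (_ : AddCommGroup T) (_ : Module A T) (f : M →ₗ[A] T),
      IsSimpleModule A T ∧ Function.Surjective f := by
  obtain ⟨L, hL⟩ := exists_coatom (A := A) (M := M)
  exact ⟨M ⧸ L, inferInstance, inferInstance, L.mkQ, isSimpleModule_iff_isCoatom.2 hL,
    L.mkQ_surjective⟩

theorem exists_proj [IsArtinianRing A] (hNak : IsNakayama A) [IsSimpleModule A S] :
    ∃ (P : Type) (_ : AddCommGroup P) (_ : Module A P) (f : P →ₗ[A] S),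
      Module.Projective A P ∧ Module.Finite A P ∧ US A P ∧ Function.Surjective f := by
  have hnt := IsSimpleModule.nontrivial A S
  obtain ⟨s, hs⟩ := exists_ne (0 : S)
  let φ : A →ₗ[A] S := LinearMap.toSpanSingleton A S s
  have hφ : φ 1 ≠ 0 := by simpa [φ] using hs
  let 𝒞 : Set (Submodule A A) := {C | (∃ D, IsCompl C D) ∧ ¬ C ≤ LinearMap.ker φ}
  have hne : 𝒞.Nonempty := ⟨⊤, ⟨⊥, isCompl_top_bot⟩, fun h => hφ (h trivial)⟩
  obtain ⟨C, ⟨⟨D, hCD⟩, hC⟩, hmin⟩ := IsArtinian.set_has_minimal 𝒞 hne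
  have hproj : Module.Projective A C :=
    Module.Projective.of_split C.subtype (C.projectionOnto D hCD)
      (by ext x; simp)
  have hsur : Function.Surjective (φ ∘ₗ C.subtype) := by
    apply LinearMap.surjective_of_ne_zero
    intro h0
    exact hC fun x hx => LinearMap.congr_fun h0 ⟨x, hx⟩
  have hCnt : Nontrivial C := by
    refine ⟨?_⟩
    obtain ⟨c, hc⟩ := hsur s
    exact ⟨c, 0, fun h => hs (by rw [← hc, h, map_zero])⟩
  have key : ∀ N₁ N₂ : Submodule A C, IsCompl N₁ N₂ → ¬ N₁ ≤ LinearMap.ker (φ ∘ₗ C.subtype) →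
      N₂ = ⊥ := by
    intro N₁ N₂ h hN
    have hmem : N₁.map C.subtype ∈ 𝒞 := by
      refine ⟨⟨N₂.map C.subtype ⊔ D, ?_⟩, ?_⟩
      · constructor
        · rw [Submodule.disjoint_def]
          intro x hx hx'
          obtain ⟨a, ha, rfl⟩ := hx
          obtain ⟨y, ⟨b, hb, rfl⟩, d, hd, hsum⟩ := Submodule.mem_sup.1 hx'
          have hd' : d ∈ C := by
            have : d = (a : A) - b := by
              rw [eq_sub_iff_add_eq, add_comm]; exact hsum
            rw [this]; exact C.sub_mem a.2 b.2
          have hd0 : d = 0 := (Submodule.disjoint_def.1 hCD.disjoint) d hd' hd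
          subst hd0
          have hab : b = a := Subtype.ext (by simpa using hsum)
          have := (Submodule.disjoint_def.1 h.disjoint) a ha (hab ▸ hb)
          simp [this]
        · rw [codisjoint_iff, ← sup_assoc, ← Submodule.map_sup, h.sup_eq_top]
          simpa using hCD.sup_eq_top
      · intro hle
        exact hN fun x hx => hle (Submodule.mem_map_of_mem hx)
    have hle : N₁.map C.subtype ≤ C := Submodule.map_subtype_le _ _
    have heq : N₁.map C.subtype = C := by
      by_contra hcon
      exact hmin _ hmem (lt_of_le_of_ne hle hcon)
    have htop : N₁ = ⊤ := by
      apply Submodule.map_injective_of_injective C.injective_subtype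
      simpa using heq
    have := h.inf_eq_bot
    simpa [htop] using this
  have hUS : US A C := by
    apply nak hNak
    intro N₁ N₂ h
    by_cases h1 : N₁ ≤ LinearMap.ker (φ ∘ₗ C.subtype)
    · left
      apply key N₂ N₁ h.symm
      intro h2
      have h3 := sup_le h1 h2
      rw [h.sup_eq_top] at h3
      obtain ⟨c, hc⟩ := hsur s
      have h4 : (φ ∘ₗ C.subtype) c = 0 := h3 trivial
      exact hs (by rw [← hc, h4])
    · right
      exact key N₁ N₂ h h1
  exact ⟨C, inferInstance, inferInstance, φ ∘ₗ C.subtype, hproj, inferInstance, hUS, hsur⟩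

theorem lift_fg [IsArtinianRing A] (hNak : IsNakayama A) [IsSimpleModule A S]
    [Module.Projective A P] (hP : US A P) (q : P →ₗ[A] E) (g : E →ₗ[A] S)
    (hg : Function.Surjective (g ∘ₗ q))
    (hcov : LinearMap.ker q ⋖ LinearMap.ker (g ∘ₗ q)) (n : ℕ) :
    ∀ (X : Type) [AddCommGroup X] [Module A X] [Module.Finite A X] (h : X →ₗ[A] S),
      Module.length A X ≤ n → (¬ ∃ s : S →ₗ[A] X, h ∘ₗ s = LinearMap.id) →
      ∃ k : X →ₗ[A] E, g ∘ₗ k = h := by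
  induction n with
  | zero =>
    intro X _ _ _ h hl _
    have : Subsingleton X := by
      rw [← Module.length_eq_zero_iff (R := A)]
      simpa using hl
    exact ⟨0, by ext x; simp [Subsingleton.elim x 0]⟩
  | succ n ih =>
    intro X _ _ _ h hl hns
    by_cases h0 : h = 0
    · exact ⟨0, by simp [h0]⟩
    by_cases hdec : ∀ (N₁ N₂ : Submodule A X), IsCompl N₁ N₂ → N₁ = ⊥ ∨ N₂ = ⊥
    · have : Nontrivial X := by
        by_contra hc
        rw [not_nontrivial_iff_subsingleton] at hc
        exact h0 (by ext x; simp [Subsingleton.elim x 0])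
      have hX : US A X := nak hNak hdec
      obtain ⟨p, hp⟩ := Module.projective_lifting_property h (g ∘ₗ q)
        (LinearMap.surjective_of_ne_zero h0)
      have hgq : g ∘ₗ q ≠ 0 := by
        intro h1
        rw [h1] at hg
        apply h0
        ext x
        obtain ⟨y, hy⟩ := hg (h x)
        rw [← hy]; rfl
      have hps : Function.Surjective p := hX.surj_of_comp h p (by rwa [hp])
      have hle : LinearMap.ker p ≤ LinearMap.ker q := by
        rcases hP (LinearMap.ker p) (LinearMap.ker q) with h1 | h1
        · exact h1
        by_cases h2 : LinearMap.ker q = LinearMap.ker p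
        · exact h2.ge
        exfalso
        have h3 : LinearMap.ker p ≤ LinearMap.ker (g ∘ₗ q) := by
          rw [← hp]; exact LinearMap.ker_le_ker_comp _ _
        have h4 : LinearMap.ker p = LinearMap.ker (g ∘ₗ q) := by
          by_contra h5
          exact hcov.2 (lt_of_le_of_ne h1 h2) (lt_of_le_of_ne h3 h5)
        have hbij : Function.Bijective h := by
          refine ⟨?_, LinearMap.surjective_of_ne_zero h0⟩
          rw [← LinearMap.ker_eq_bot, LinearMap.ker_eq_bot']
          intro x hx
          obtain ⟨y, rfl⟩ := hps x
          have : y ∈ LinearMap.ker p := by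
            rw [h4, ← hp]; exact hx
          exact this
        refine hns ⟨(LinearEquiv.ofBijective h hbij).symm.toLinearMap, ?_⟩
        ext x
        exact (LinearEquiv.ofBijective h hbij).apply_symm_apply x
      obtain ⟨k, hk⟩ := exists_factor p hps q hle
      refine ⟨k, ?_⟩
      ext x
      obtain ⟨y, rfl⟩ := hps x
      have e1 := LinearMap.congr_fun hk y
      have e2 := LinearMap.congr_fun hp y
      simp only [LinearMap.comp_apply] at e1 e2 ⊢
      rw [e1, e2]
    · push Not at hdec
      obtain ⟨N₁, N₂, hc, h1, h2⟩ := hdec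
      have step : ∀ N₁ N₂ : Submodule A X, IsCompl N₁ N₂ → N₂ ≠ ⊥ →
          ∃ k : N₁ →ₗ[A] E, g ∘ₗ k = h ∘ₗ N₁.subtype := by
        intro N₁ N₂ hc h2
        apply ih
        · have hne : N₁ ≠ ⊤ := by
            rintro rfl
            exact h2 (by simpa using hc.inf_eq_bot)
          have := Submodule.length_lt (R := A) hne
          exact ENat.lt_natCast_add_one_iff.1 (lt_of_lt_of_le this (by exact_mod_cast hl))
        · rintro ⟨s, hs⟩
          exact hns ⟨N₁.subtype ∘ₗ s, by rw [← LinearMap.comp_assoc, hs]⟩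
      obtain ⟨k₁, hk₁⟩ := step N₁ N₂ hc h2
      obtain ⟨k₂, hk₂⟩ := step N₂ N₁ hc.symm h1
      refine ⟨LinearMap.ofIsCompl hc k₁ k₂, ?_⟩
      ext x
      have hx : x ∈ N₁ ⊔ N₂ := by rw [hc.sup_eq_top]; trivial
      obtain ⟨a, ha, b, hb, rfl⟩ := Submodule.mem_sup.1 hx
      have e1 := LinearMap.congr_fun hk₁ ⟨a, ha⟩
      have e2 := LinearMap.congr_fun hk₂ ⟨b, hb⟩
      have f1 := LinearMap.ofIsCompl_apply_left hc (φ := k₁) (ψ := k₂) ⟨a, ha⟩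
      have f2 := LinearMap.ofIsCompl_apply_right hc (φ := k₁) (ψ := k₂) ⟨b, hb⟩
      simp only [LinearMap.comp_apply, Submodule.subtype_apply, map_add] at e1 e2 f1 f2 ⊢
      rw [f1, f2, e1, e2]

end ModuleLevel

end NakAux
namespace NakAux

open ArtinAlg

section ModuleLevel2

variable {A : Type} [Ring A]
variable {M N P X Y Z E S : Type} [AddCommGroup M] [Module A M] [AddCommGroup N] [Module A N]
  [AddCommGroup P] [Module A P] [AddCommGroup X] [Module A X] [AddCommGroup Y] [Module A Y]
  [AddCommGroup Z] [Module A Z] [AddCommGroup E] [Module A E] [AddCommGroup S] [Module A S]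

theorem exists_nonzero_of_surj [IsSimpleModule A S] {f : M →ₗ[A] S}
    (hf : Function.Surjective f) : f ≠ 0 := by
  rintro rfl
  have hnt := IsSimpleModule.nontrivial A S
  obtain ⟨s, hs⟩ := exists_ne (0 : S)
  obtain ⟨y, hy⟩ := hf s
  exact hs (by rw [← hy]; rfl)

theorem lift_all [IsArtinianRing A] (hNak : IsNakayama A) [IsSimpleModule A S]
    [Module.Projective A P] [Module.Finite A P]
    (hP : US A P) (hE : US A E) (q : P →ₗ[A] E) (g : E →ₗ[A] S)
    (hg : Function.Surjective (g ∘ₗ q)) (hsimp : IsSimpleModule A (LinearMap.ker g))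
    (hcov : LinearMap.ker q ⋖ LinearMap.ker (g ∘ₗ q))
    (h : X →ₗ[A] S) (hns : ¬ ∃ s : S →ₗ[A] X, h ∘ₗ s = LinearMap.id) :
    ∃ k : X →ₗ[A] E, g ∘ₗ k = h := by
  by_cases h0 : h = 0
  · exact ⟨0, by simp [h0]⟩
  have hsur := LinearMap.surjective_of_ne_zero h0
  obtain ⟨p, hp⟩ := Module.projective_lifting_property h (g ∘ₗ q) hsur
  have hpx : ∀ z, h (p z) = g (q z) := fun z => LinearMap.congr_fun hp z
  let K := LinearMap.ker h
  let W := LinearMap.ker (g ∘ₗ q)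
  let p' : W →ₗ[A] K := (p ∘ₗ W.subtype).codRestrict K (fun z => by
    change h (p z) = 0
    rw [hpx]; exact z.2)
  obtain ⟨y, hyW, hyq⟩ : ∃ y ∈ W, q y ≠ 0 := by
    obtain ⟨y, hy, hy'⟩ := SetLike.exists_of_lt hcov.1
    exact ⟨y, hy, hy'⟩
  have hWy : ∀ (L : Submodule A P), y ∈ L → LinearMap.ker q ≤ L → W ≤ L := by
    intro L hyL hL
    have h1 : LinearMap.ker q < L ⊓ W :=
      lt_of_le_of_ne (le_inf hL hcov.1.le) (fun e => hyq (by
        have : y ∈ L ⊓ W := ⟨hyL, hyW⟩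
        rw [← e] at this; exact this))
    have h2 : L ⊓ W = W := by
      by_contra hne
      exact hcov.2 h1 (lt_of_le_of_ne inf_le_right hne)
    exact inf_eq_right.1 h2
  have hnot : p' ⟨y, hyW⟩ ∉ Module.jacobson A K := by
    intro hmem
    have hmem2 := jac_le hmem
    obtain ⟨F, hFg, hF⟩ : ∃ F : Submodule A K, F.FG ∧ p' ⟨y, hyW⟩ ∈ Ring.jacobson A • F := by
      refine Submodule.smul_induction_on
        (p := fun u => ∃ F : Submodule A K, F.FG ∧ u ∈ Ring.jacobson A • F) hmem2 ?_ ?_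
      · intro r hr n _
        exact ⟨Submodule.span A {n}, Submodule.fg_span_singleton n,
          Submodule.smul_mem_smul hr (Submodule.mem_span_singleton_self n)⟩
      · rintro u v ⟨F, hF, hu⟩ ⟨G, hG, hv⟩
        exact ⟨F ⊔ G, hF.sup hG, Submodule.add_mem _ (Submodule.smul_mono le_rfl le_sup_left hu)
          (Submodule.smul_mono le_rfl le_sup_right hv)⟩
    let X' : Submodule A X := F.map K.subtype ⊔ LinearMap.range p
    have hX'fg : X'.FG := (hFg.map _).sup (by
      rw [LinearMap.range_eq_map]; exact (Module.Finite.fg_top).map p)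
    have : Module.Finite A X' := ⟨by
      rw [Submodule.fg_top]; exact hX'fg⟩
    have hlen : Module.length A X' ≠ ⊤ := Module.length_ne_top
    obtain ⟨n, hn⟩ := ENat.ne_top_iff_exists.1 hlen
    obtain ⟨k, hk⟩ := lift_fg hNak hP q g hg hcov n X' (h ∘ₗ X'.subtype) hn.ge (by
      rintro ⟨s, hs⟩
      exact hns ⟨X'.subtype ∘ₗ s, by rw [← LinearMap.comp_assoc, hs]⟩)
    let iF : F →ₗ[A] X' := (K.subtype ∘ₗ F.subtype).codRestrict X' (fun z =>
      (le_sup_left : F.map K.subtype ≤ X') (Submodule.mem_map_of_mem z.2))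
    let kF : F →ₗ[A] LinearMap.ker g := (k ∘ₗ iF).codRestrict _ (fun z => by
      have e := LinearMap.congr_fun hk (iF z)
      simp only [LinearMap.comp_apply] at e
      change g (k (iF z)) = 0
      rw [e]; exact z.1.2)
    have hkF : ∀ u (hu : u ∈ F), u ∈ Ring.jacobson A • F → kF ⟨u, hu⟩ = 0 := by
      intro u hu hu2
      have h1 : (⟨u, hu⟩ : F) ∈ Module.jacobson A F := by
        apply Ring.jacobson_smul_top_le
        have : Submodule.map F.subtype (Ring.jacobson A • (⊤ : Submodule A F)) =
            Ring.jacobson A • F := by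
          rw [Submodule.map_smul'']; simp
        rw [← this] at hu2
        obtain ⟨w, hw, rfl⟩ := hu2
        exact hw
      exact IsSemisimpleModule.jacobson_le_ker A A F (LinearMap.ker g) kF h1
    have hyF : p' ⟨y, hyW⟩ ∈ F := Submodule.smul_le_right hF
    have hz := hkF _ hyF hF
    let p'' : P →ₗ[A] X' := p.codRestrict X' (fun z =>
      (le_sup_right : LinearMap.range p ≤ X') ⟨z, rfl⟩)
    have hkp : ∀ z, g (k (p'' z)) = g (q z) := fun z => by
      have e := LinearMap.congr_fun hk (p'' z)
      simp only [LinearMap.comp_apply] at e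
      rw [e]; exact hpx z
    have hkps : Function.Surjective (k ∘ₗ p'') := by
      apply hE.surj_of_comp g
      intro h1
      exact exists_nonzero_of_surj hg (by
        ext z
        have := LinearMap.congr_fun h1 z
        simp only [LinearMap.comp_apply] at this ⊢
        rw [← hkp, this])
    have hky : k (p'' y) = 0 := by
      have : k (iF ⟨_, hyF⟩) = 0 := congrArg Subtype.val hz
      exact this
    have hle : LinearMap.ker q ≤ LinearMap.ker (k ∘ₗ p'') := by
      rcases hP (LinearMap.ker q) (LinearMap.ker (k ∘ₗ p'')) with h1 | h1
      · exact h1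
      · exact absurd (h1 hky) hyq
    have hW := hWy _ hky hle
    have hbot : LinearMap.ker g = ⊥ := by
      rw [LinearMap.ker_eq_bot']
      intro e he
      obtain ⟨z, rfl⟩ := hkps e
      apply hW
      change g (q z) = 0
      rw [← hkp]; exact he
    have hnt := IsSimpleModule.nontrivial A (LinearMap.ker g)
    rw [hbot] at hnt
    exact not_subsingleton _ (inferInstance : Subsingleton (⊥ : Submodule A E))
  obtain ⟨L, hL, hyL⟩ : ∃ L : Submodule A K, IsCoatom L ∧ p' ⟨y, hyW⟩ ∉ L := by
    by_contra hc
    push Not at hc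
    apply hnot
    rw [Module.jacobson, Submodule.mem_sInf]
    exact fun L hL => hc L hL
  let c : W →ₗ[A] K ⧸ L := L.mkQ ∘ₗ p'
  have hLs : IsSimpleModule A (K ⧸ L) := isSimpleModule_iff_isCoatom.2 hL
  let qW : W →ₗ[A] LinearMap.ker g := (q ∘ₗ W.subtype).codRestrict _ (fun z => z.2)
  have hqy : qW ⟨y, hyW⟩ ≠ 0 := fun e => hyq (congrArg Subtype.val e)
  have hcy : c ⟨y, hyW⟩ ≠ 0 := by
    intro e
    exact hyL ((Submodule.Quotient.mk_eq_zero L).1 e)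
  have hc1 : IsCoatom (LinearMap.ker c) := LinearMap.isCoatom_ker_of_surjective
    (LinearMap.surjective_of_ne_zero fun e => hcy (by rw [e]; rfl))
  have hq1 : IsCoatom (LinearMap.ker qW) := LinearMap.isCoatom_ker_of_surjective
    (LinearMap.surjective_of_ne_zero fun e => hqy (by rw [e]; rfl))
  have hWU : US A W := hP.of_injective W.subtype W.injective_subtype
  have hkk : LinearMap.ker c = LinearMap.ker qW := by
    by_contra hne
    have a1 : ¬ LinearMap.ker c ≤ LinearMap.ker qW := fun hle =>
      hq1.1 (hc1.2 _ (lt_of_le_of_ne hle hne))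
    exact hc1.1 (hWU.eq_top hq1 a1)
  obtain ⟨d, hd⟩ := exists_factor c
    (LinearMap.surjective_of_ne_zero fun e => hcy (by rw [e]; rfl)) qW hkk.le
  let r : K →ₗ[A] E := (LinearMap.ker g).subtype ∘ₗ d ∘ₗ L.mkQ
  have hr : ∀ z (hz : z ∈ W), r (p' ⟨z, hz⟩) = q z := fun z hz =>
    congrArg Subtype.val (LinearMap.congr_fun hd ⟨z, hz⟩)
  have hgr : ∀ u, g (r u) = 0 := fun u => (d (L.mkQ u)).2
  let F : K × P →ₗ[A] X := K.subtype.coprod p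
  let G : K × P →ₗ[A] E := r.coprod q
  have hFs : Function.Surjective F := by
    intro x
    obtain ⟨z, hz⟩ := hg (h x)
    refine ⟨(⟨x - p z, ?_⟩, z), ?_⟩
    · change h (x - p z) = 0
      rw [map_sub, hpx, ← hz]; simp
    · simp [F]
  have hFG : LinearMap.ker F ≤ LinearMap.ker G := by
    rintro ⟨u, z⟩ huz
    have e1 : (u : X) + p z = 0 := by simpa [F] using huz
    have hz : z ∈ W := by
      change g (q z) = 0
      have := congrArg h e1
      rw [map_add, hpx, map_zero] at this
      have hu : h u = 0 := u.2
      rwa [hu, zero_add] at this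
    have e2 : u + p' ⟨z, hz⟩ = 0 := Subtype.ext e1
    have e3 := congrArg r e2
    rw [map_add, hr, map_zero] at e3
    simpa [G] using e3
  obtain ⟨k, hk⟩ := exists_factor F hFs G hFG
  refine ⟨k, ?_⟩
  ext x
  obtain ⟨⟨u, z⟩, rfl⟩ := hFs x
  have e := LinearMap.congr_fun hk (u, z)
  simp only [LinearMap.comp_apply] at e ⊢
  rw [e]
  have hu : h u = 0 := u.2
  simp [F, G, hgr, hpx, hu]

end ModuleLevel2

end NakAux
namespace NakAux

open ArtinAlg

section Cat

variable {A : Type} [Ring A]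

theorem surj_of_epi {M N : ModuleCat.{0} A} {f : M ⟶ N} (h : Epi f) :
    Function.Surjective f.hom := (ModuleCat.epi_iff_surjective f).1 h

theorem inj_of_mono {M N : ModuleCat.{0} A} {f : M ⟶ N} (h : Mono f) :
    Function.Injective f.hom := (ModuleCat.mono_iff_injective f).1 h

theorem epi_of_surj {M N : ModuleCat.{0} A} {f : M ⟶ N} (h : Function.Surjective f.hom) :
    Epi f := (ModuleCat.epi_iff_surjective f).2 h

theorem mono_of_inj {M N : ModuleCat.{0} A} {f : M ⟶ N} (h : Function.Injective f.hom) :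
    Mono f := (ModuleCat.mono_iff_injective f).2 h

theorem US.of_iso {M N : ModuleCat.{0} A} (e : M ≅ N) (h : US A M) : US A N :=
  h.of_surjective e.toLinearEquiv.toLinearMap e.toLinearEquiv.surjective

/-- Epimorphisms from a uniserial module through which a simple quotient factors. -/
theorem US.ess {M T : ModuleCat.{0} A} (hM : US A M) (hT : IsSimpleModule A T) {f : M ⟶ T}
    (N : ModuleCat.{0} A) (g : N ⟶ M) (h : Epi (g ≫ f)) : Epi g :=
  epi_of_surj (hM.surj_of_comp f.hom g.hom (exists_nonzero_of_surj (surj_of_epi h)))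

theorem isSimpleTop {M T : ModuleCat.{0} A} (hM : US A M) (hT : IsSimpleModule A T)
    (f : M →ₗ[A] T) (hf : Function.Surjective f) : IsSimpleTopOf A M T :=
  ⟨hT, ModuleCat.ofHom f, epi_of_surj hf, fun N g h => hM.ess hT N g h⟩

theorem exists_simpleTop [IsArtinianRing A] {M : ModuleCat.{0} A} (hM : US A M)
    (hnt : Nontrivial M) : ∃ T, IsSimpleTopOf A M T := by
  obtain ⟨T, _, _, f, hT, hf⟩ := hM.exists_top
  exact ⟨ModuleCat.of A T, isSimpleTop (T := ModuleCat.of A T) hM hT f hf⟩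

theorem top_surj {M T : ModuleCat.{0} A} (h : IsSimpleTopOf A M T) :
    ∃ f : M →ₗ[A] T, Function.Surjective f := by
  obtain ⟨_, f, hf, _⟩ := h
  exact ⟨f.hom, surj_of_epi hf⟩

theorem top_nontrivial {M T : ModuleCat.{0} A} (h : IsSimpleTopOf A M T) : Nontrivial M := by
  obtain ⟨f, hf⟩ := top_surj h
  have := h.1
  have := IsSimpleModule.nontrivial A T
  exact hf.nontrivial

theorem top_iso {M M' T T' : ModuleCat.{0} A} (hM : US A M) (h : IsSimpleTopOf A M T)
    (e : M ≅ M') (h' : IsSimpleTopOf A M' T') : Nonempty (T ≅ T') := by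
  obtain ⟨f, hf⟩ := top_surj h
  obtain ⟨f', hf'⟩ := top_surj h'
  have hT := h.1
  have hT' := h'.1
  let f'' : M →ₗ[A] T' := f' ∘ₗ e.toLinearEquiv.toLinearMap
  have hf'' : Function.Surjective f'' := hf'.comp e.toLinearEquiv.surjective
  have c1 := LinearMap.isCoatom_ker_of_surjective hf
  have c2 := LinearMap.isCoatom_ker_of_surjective hf''
  have hle : LinearMap.ker f ≤ LinearMap.ker f'' := by
    by_contra hc
    exact c1.1 (hM.eq_top c2 hc)
  obtain ⟨k, hk⟩ := exists_factor f hf f'' hle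
  have hk0 : k ≠ 0 := by
    rintro rfl
    exact exists_nonzero_of_surj hf'' (by rw [← hk]; simp)
  exact ⟨(LinearEquiv.ofBijective k (LinearMap.bijective_of_ne_zero hk0)).toModuleIso⟩

theorem simple_of_iso {T T' : ModuleCat.{0} A} (e : T ≅ T') (h : IsSimpleModule A T) :
    IsSimpleModule A T' := e.toLinearEquiv.isSimpleModule_iff.1 h

theorem top_of_iso {M T T' : ModuleCat.{0} A} (hM : US A M) (h : IsSimpleTopOf A M T)
    (e : T ≅ T') : IsSimpleTopOf A M T' := by
  obtain ⟨f, hf⟩ := top_surj h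
  exact isSimpleTop hM (simple_of_iso e h.1) (e.toLinearEquiv.toLinearMap ∘ₗ f)
    (e.toLinearEquiv.surjective.comp hf)

/-! ### projective covers -/

theorem modProj {P : ModuleCat.{0} A} : Module.Projective A P ↔ Projective P :=
  IsProjective.iff_projective (R := A) P

theorem cover_unique {P P' M : ModuleCat.{0} A} {f : P ⟶ M} {f' : P' ⟶ M}
    (h : IsProjectiveCoverHom A f) (h' : IsProjectiveCoverHom A f') :
    ∃ e : P ≅ P', e.hom ≫ f' = f := by
  obtain ⟨hP, hf, hess⟩ := h
  obtain ⟨hP', hf', hess'⟩ := h'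
  let a : P ⟶ P' := Projective.factorThru f f'
  have ha : a ≫ f' = f := Projective.factorThru_comp f f'
  have hae : Epi a := hess' _ a (by rw [ha]; exact hf)
  let s : P' ⟶ P := Projective.factorThru (𝟙 P') a
  have hs : s ≫ a = 𝟙 P' := Projective.factorThru_comp _ _
  have hsf : s ≫ f = f' := by rw [← ha, ← Category.assoc, hs, Category.id_comp]
  have hse : Epi s := hess _ s (by rw [hsf]; exact hf')
  refine ⟨⟨a, s, ?_, hs⟩, ha⟩
  rw [← cancel_epi s, ← Category.assoc, hs]; simp

theorem cover_iso {P M M' : ModuleCat.{0} A} {f : P ⟶ M} (h : IsProjectiveCoverHom A f)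
    (e : M ≅ M') : IsProjectiveCoverHom A (f ≫ e.hom) := by
  obtain ⟨hP, hf, hess⟩ := h
  refine ⟨hP, epi_comp _ _, fun N g hg => hess N g ?_⟩
  have : g ≫ f = (g ≫ f ≫ e.hom) ≫ e.inv := by simp
  rw [this]
  exact epi_comp _ _

theorem cover_sub {P M : ModuleCat.{0} A} {f : P ⟶ M} (h : IsProjectiveCoverHom A f)
    (hM : Subsingleton M) : Subsingleton P := by
  obtain ⟨hP, hf, hess⟩ := h
  have : Epi (0 : ModuleCat.of A PUnit ⟶ P) := hess _ _ (epi_of_surj (fun m =>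
    ⟨0, Subsingleton.elim _ _⟩))
  have hs := surj_of_epi this
  refine ⟨fun x y => ?_⟩
  obtain ⟨a, rfl⟩ := hs x
  obtain ⟨b, rfl⟩ := hs y
  rfl

variable [IsArtinianRing A]

theorem exists_cover (hNak : IsNakayama A) {M : ModuleCat.{0} A} (hM : US A M) :
    ∃ (P : ModuleCat.{0} A) (f : P ⟶ M), IsProjectiveCoverHom A f ∧ US A P := by
  rcases subsingleton_or_nontrivial M with hs | hnt
  · refine ⟨ModuleCat.of A PUnit, 0, ⟨modProj.1 (inferInstanceAs (Module.Projective A PUnit)),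
      epi_of_surj (fun m => ⟨0, Subsingleton.elim _ _⟩), fun N g _ => epi_of_surj (fun m =>
        ⟨0, Subsingleton.elim (α := PUnit) _ _⟩)⟩, fun a b => Or.inl ?_⟩
    intro x _
    have : x = 0 := Subsingleton.elim (α := PUnit) _ _
    rw [this]; exact b.zero_mem
  · obtain ⟨T, _, _, t, hT, ht⟩ := hM.exists_top
    obtain ⟨P, _, _, p, hP, hPf, hPU, hp⟩ := exists_proj hNak (S := T)
    obtain ⟨f, hf⟩ := Module.projective_lifting_property t p ht
    have hfs : Function.Surjective f := hM.surj_of_comp t f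
      (by rw [hf]; exact exists_nonzero_of_surj hp)
    refine ⟨ModuleCat.of A P, ModuleCat.ofHom f, ⟨modProj.1 hP, epi_of_surj hfs, ?_⟩, hPU⟩
    intro N g hg
    refine US.ess (M := ModuleCat.of A P) (T := ModuleCat.of A T) hPU hT (f := ModuleCat.ofHom p)
      N g (epi_of_surj ?_)
    have h2 := ht.comp (surj_of_epi hg)
    have e : ∀ x, p (g.hom x) = t ((g ≫ ModuleCat.ofHom f).hom x) := fun x =>
      (LinearMap.congr_fun hf (g.hom x)).symm
    intro y
    obtain ⟨x, hx⟩ := h2 y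
    exact ⟨x, (e x).trans hx⟩

theorem cover_US (hNak : IsNakayama A) {P M : ModuleCat.{0} A} (hM : US A M) {f : P ⟶ M}
    (h : IsProjectiveCoverHom A f) : US A P := by
  obtain ⟨P', f', h', hU⟩ := exists_cover hNak hM
  obtain ⟨e, _⟩ := cover_unique h' h
  exact hU.of_iso e

/-! ### syzygies -/

theorem syz_data {M X : ModuleCat.{0} A} (h : IsSyzygyOf A M X) :
    ∃ (P : ModuleCat.{0} A) (f : P ⟶ M) (i : X →ₗ[A] P), IsProjectiveCoverHom A f ∧
      Function.Injective i ∧ LinearMap.range i = LinearMap.ker f.hom := by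
  obtain ⟨P, f, hf, ⟨e⟩⟩ := h
  let e' : X ≃ₗ[A] LinearMap.ker f.hom := (e ≪≫ ModuleCat.kernelIsoKer f).toLinearEquiv
  refine ⟨P, f, (LinearMap.ker f.hom).subtype ∘ₗ e'.toLinearMap, hf,
    Subtype.val_injective.comp e'.injective, ?_⟩
  rw [LinearMap.range_comp, LinearEquiv.range]
  simp

theorem syz_US (hNak : IsNakayama A) {M X : ModuleCat.{0} A} (hM : US A M)
    (h : IsSyzygyOf A M X) : US A X := by
  obtain ⟨P, f, i, hf, hi, _⟩ := syz_data h
  exact (cover_US hNak hM hf).of_injective i hi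

theorem syz_exists (hNak : IsNakayama A) {M : ModuleCat.{0} A} (hM : US A M) :
    ∃ X, IsSyzygyOf A M X := by
  obtain ⟨P, f, h, _⟩ := exists_cover hNak hM
  exact ⟨kernel f, P, f, h, ⟨Iso.refl _⟩⟩

theorem nth_US (hNak : IsNakayama A) (n : ℕ) : ∀ {M X : ModuleCat.{0} A}, US A M →
    IsNthSyzygy A n M X → US A X := by
  induction n with
  | zero => rintro M X hM ⟨e⟩; exact hM.of_iso e.symm
  | succ n ih => rintro M X hM ⟨Y, hY, hX⟩; exact ih (syz_US hNak hM hY) hX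

theorem nth_exists (hNak : IsNakayama A) (n : ℕ) : ∀ {M : ModuleCat.{0} A}, US A M →
    ∃ X, IsNthSyzygy A n M X := by
  induction n with
  | zero => intro M _; exact ⟨M, ⟨Iso.refl _⟩⟩
  | succ n ih =>
    intro M hM
    obtain ⟨Y, hY⟩ := syz_exists hNak hM
    obtain ⟨X, hX⟩ := ih (syz_US hNak hM hY)
    exact ⟨X, Y, hY, hX⟩

theorem syz_sub {M X : ModuleCat.{0} A} (hM : Subsingleton M) (h : IsSyzygyOf A M X) :
    Subsingleton X := by
  obtain ⟨P, f, i, hf, hi, _⟩ := syz_data h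
  have := cover_sub hf hM
  exact hi.subsingleton

theorem nth_sub (n : ℕ) : ∀ {M X : ModuleCat.{0} A}, Subsingleton M →
    IsNthSyzygy A n M X → Subsingleton X := by
  induction n with
  | zero => rintro M X hM ⟨e⟩; exact e.toLinearEquiv.injective.subsingleton
  | succ n ih => rintro M X hM ⟨Y, hY, hX⟩; exact ih (syz_sub hM hY) hX

theorem pd_iso {n : ℕ} {M : ModuleCat.{0} A} (h : ProjDimLE A n M) :
    ∀ {M' : ModuleCat.{0} A}, (M ≅ M') → ProjDimLE A n M' := by
  induction h with
  | zero M h => intro M' e; exact ProjDimLE.zero M' (Projective.of_iso e h)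
  | succ n M P f hP hf h ih =>
    intro M' e
    exact ProjDimLE.succ n M' P (f ≫ e.hom) hP (epi_comp _ _)
      (ih (kernelCompMono f e.hom).symm)

theorem projDim_iso {M M' : ModuleCat.{0} A} (e : M ≅ M') : projDim A M = projDim A M' := by
  unfold projDim
  congr 1
  ext d
  constructor
  · rintro ⟨n, hd, h⟩; exact ⟨n, hd, pd_iso h e⟩
  · rintro ⟨n, hd, h⟩; exact ⟨n, hd, pd_iso h e.symm⟩

theorem pd_of_nth (n : ℕ) : ∀ {M X : ModuleCat.{0} A}, IsNthSyzygy A (n + 1) M X →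
    Subsingleton X → ProjDimLE A n M := by
  induction n with
  | zero =>
    rintro M X ⟨Y, hY, ⟨e⟩⟩ hX
    have hYs : Subsingleton Y := e.symm.toLinearEquiv.injective.subsingleton
    obtain ⟨P, f, i, hf, hi, hr⟩ := syz_data hY
    have hinj : Function.Injective f.hom := by
      rw [← LinearMap.ker_eq_bot, ← hr, LinearMap.range_eq_bot]
      ext y
      simp [Subsingleton.elim y 0]
    let e : P ≃ₗ[A] M := LinearEquiv.ofBijective f.hom ⟨hinj, surj_of_epi hf.2.1⟩
    exact ProjDimLE.zero M (Projective.of_iso e.toModuleIso hf.1)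
  | succ n ih =>
    rintro M X ⟨Y, ⟨P, f, hf, ⟨e⟩⟩, hX⟩ hs
    exact ProjDimLE.succ n M P f hf.1 hf.2.1 (pd_iso (ih hX hs) e)

theorem nth_nontrivial {n : ℕ} {M X : ModuleCat.{0} A} (hM : Nontrivial M)
    (hn : (n : ℕ∞) ≤ projDim A M) (h : IsNthSyzygy A n M X) : Nontrivial X := by
  by_contra hc
  rw [not_nontrivial_iff_subsingleton] at hc
  cases n with
  | zero =>
    obtain ⟨e⟩ := h
    have : Subsingleton M := e.symm.toLinearEquiv.injective.subsingleton
    exact not_subsingleton M this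
  | succ n =>
    have h1 : projDim A M ≤ n := sInf_le ⟨n, rfl, pd_of_nth n h hc⟩
    have h2 := hn.trans h1
    have h3 : n + 1 ≤ n := by exact_mod_cast h2
    omega

end Cat

end NakAux
namespace NakAux

open ArtinAlg

section Tau

variable {A : Type} [Ring A]

/-- A short exact sequence of uniserial modules with simple ends. -/
structure Good {Z E V : ModuleCat.{0} A} (f : Z ⟶ E) (g : E ⟶ V) : Prop where
  us : US A E
  sz : IsSimpleModule A Z
  sv : IsSimpleModule A V
  inj : Function.Injective f.hom
  surj : Function.Surjective g.hom
  ex : LinearMap.range f.hom = LinearMap.ker g.hom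

theorem Good.nonsplit {Z E V : ModuleCat.{0} A} {f : Z ⟶ E} {g : E ⟶ V} (h : Good f g)
    (s : V →ₗ[A] E) : ¬ g.hom ∘ₗ s = LinearMap.id := by
  intro hs
  have := h.sv
  have := h.sz
  have hne : g.hom ∘ₗ s ≠ 0 := by
    rw [hs]
    exact exists_nonzero_of_surj (f := LinearMap.id (R := A) (M := V)) Function.surjective_id
  have hss := h.us.surj_of_comp g.hom s hne
  have hnt := IsSimpleModule.nontrivial A Z
  obtain ⟨z, hz⟩ := exists_ne (0 : Z)
  obtain ⟨v, hv⟩ := hss (f.hom z)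
  have h1 : f.hom z ∈ LinearMap.ker g.hom := by rw [← h.ex]; exact ⟨z, rfl⟩
  have h2 : g.hom (s v) = v := LinearMap.congr_fun hs v
  rw [hv] at h2
  have h3 : v = 0 := by rw [← h2]; exact h1
  rw [h3, map_zero] at hv
  exact hz (h.inj (by rw [← hv, map_zero]))

theorem indec_of_simple {M : ModuleCat.{0} A} (h : IsSimpleModule A M) : Indec A M := by
  refine ⟨IsSimpleModule.nontrivial A M, fun N₁ N₂ hc => ?_⟩
  rcases eq_bot_or_eq_top N₁ with h1 | h1
  · exact Or.inl h1
  · right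
    have := hc.inf_eq_bot
    rwa [h1, top_inf_eq] at this

theorem Good.lift [IsArtinianRing A] (hNak : IsNakayama A) {Z E V : ModuleCat.{0} A} {f : Z ⟶ E}
    {g : E ⟶ V} (h : Good f g) {X : ModuleCat.{0} A} (u : X →ₗ[A] V)
    (hns : ¬ ∃ s : V →ₗ[A] X, u ∘ₗ s = LinearMap.id) : ∃ k : X →ₗ[A] E, g.hom ∘ₗ k = u := by
  have := h.sv
  have := h.sz
  obtain ⟨P, _, _, p, hP, hPf, hPU, hp⟩ := exists_proj hNak (S := V)
  obtain ⟨q, hq⟩ := Module.projective_lifting_property g.hom p h.surj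
  have hqs : Function.Surjective q := h.us.surj_of_comp g.hom q
    (by rw [hq]; exact exists_nonzero_of_surj hp)
  have hsimp : IsSimpleModule A (LinearMap.ker g.hom) := by
    rw [← h.ex]
    exact (LinearEquiv.ofInjective f.hom h.inj).isSimpleModule_iff.1 h.sz
  have hatom : IsAtom (LinearMap.ker g.hom) := isSimpleModule_iff_isAtom.1 hsimp
  refine lift_all hNak hPU h.us q g.hom (by rw [hq]; exact hp) hsimp ?_ u hns
  constructor
  · refine lt_of_le_of_ne (LinearMap.ker_le_ker_comp _ _) fun e => hatom.1 ?_
    rw [LinearMap.ker_eq_bot']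
    intro x hx
    obtain ⟨y, rfl⟩ := hqs x
    have : y ∈ LinearMap.ker (g.hom ∘ₗ q) := hx
    rw [← e] at this
    exact this
  · intro K h1 h2
    have hle : K.map q ≤ LinearMap.ker g.hom := by
      rintro _ ⟨k, hk, rfl⟩
      exact h2.le hk
    rcases hatom.le_iff.1 hle with h3 | h3
    · refine h1.not_ge fun k hk => ?_
      have : q k ∈ K.map q := Submodule.mem_map_of_mem hk
      rw [h3] at this
      exact this
    · refine h2.not_ge fun w hw => ?_
      have : q w ∈ K.map q := by rw [h3]; exact hw
      obtain ⟨k, hk, hkw⟩ := this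
      have h4 : w - k ∈ K := h1.le (by
        change q (w - k) = 0
        rw [map_sub, hkw, sub_self])
      have := K.add_mem h4 hk
      simpa using this

theorem Good.almostSplit [IsArtinianRing A] (hNak : IsNakayama A) {Z E V : ModuleCat.{0} A}
    {f : Z ⟶ E} {g : E ⟶ V} (h : Good f g) : IsAlmostSplitSeq A f g := by
  refine ⟨mono_of_inj h.inj, epi_of_surj h.surj, ⟨?_, ?_⟩, ?_, indec_of_simple h.sz,
    indec_of_simple h.sv, ?_⟩
  · ext z
    have : f.hom z ∈ LinearMap.ker g.hom := by rw [← h.ex]; exact ⟨z, rfl⟩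
    exact this
  · rw [ShortComplex.moduleCat_exact_iff_range_eq_ker]
    exact h.ex
  · rintro ⟨s, hs⟩
    exact h.nonsplit s.hom (congrArg ModuleCat.Hom.hom hs)
  · intro X u hu
    obtain ⟨k, hk⟩ := h.lift hNak u.hom (by
      rintro ⟨s, hs⟩
      exact hu ⟨ModuleCat.ofHom s, ModuleCat.hom_ext hs⟩)
    exact ⟨ModuleCat.ofHom k, ModuleCat.hom_ext hk⟩

theorem Good.tau [IsArtinianRing A] (hNak : IsNakayama A) {Z E V : ModuleCat.{0} A}
    {f : Z ⟶ E} {g : E ⟶ V} (h : Good f g) : IsTauOf A Z V :=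
  ⟨E, f, g, h.almostSplit hNak⟩

theorem Good.comp_iso {Z E V V' : ModuleCat.{0} A} {f : Z ⟶ E} {g : E ⟶ V} (h : Good f g)
    (e : V ≅ V') : Good f (g ≫ e.hom) := by
  refine ⟨h.us, h.sz, simple_of_iso e h.sv, h.inj, ?_, ?_⟩
  · exact e.toLinearEquiv.surjective.comp h.surj
  · rw [h.ex]
    ext x
    have : (g ≫ e.hom).hom x = e.toLinearEquiv (g.hom x) := rfl
    simp only [LinearMap.mem_ker]
    rw [this, LinearEquiv.map_eq_zero_iff]

theorem exists_good {W V Y Z : ModuleCat.{0} A} (hW : US A W) (hV : IsSimpleModule A V)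
    (hZ : IsSimpleModule A Z) (i : Y →ₗ[A] W) (hi : Function.Injective i) (g : W →ₗ[A] V)
    (hg : Function.Surjective g) (hr : LinearMap.range i = LinearMap.ker g) (c : Y →ₗ[A] Z)
    (hc : Function.Surjective c) :
    ∃ (E : ModuleCat.{0} A) (f : Z ⟶ E) (g : E ⟶ V), Good f g := by
  let B : Submodule A W := (LinearMap.ker c).map i
  have hB : B ≤ LinearMap.ker g := by
    rintro _ ⟨y, _, rfl⟩
    rw [← hr]; exact ⟨y, rfl⟩
  obtain ⟨f, hf⟩ := exists_factor c hc (B.mkQ ∘ₗ i) (by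
    intro y hy
    have : i y ∈ B := Submodule.mem_map_of_mem hy
    simpa using this)
  have hfy : ∀ y, f (c y) = B.mkQ (i y) := fun y => LinearMap.congr_fun hf y
  refine ⟨ModuleCat.of A (W ⧸ B), ModuleCat.ofHom f, ModuleCat.ofHom (B.liftQ g hB),
    hW.of_surjective B.mkQ B.mkQ_surjective, hZ, hV, ?_, ?_, ?_⟩
  · change Function.Injective f
    rw [← LinearMap.ker_eq_bot, LinearMap.ker_eq_bot']
    intro z hz
    obtain ⟨y, rfl⟩ := hc z
    rw [hfy] at hz
    have h1 : i y ∈ B := (Submodule.Quotient.mk_eq_zero B).1 hz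
    obtain ⟨y', hy', e⟩ := h1
    rw [← hi e]; exact hy'
  · intro v
    obtain ⟨w, rfl⟩ := hg v
    exact ⟨B.mkQ w, rfl⟩
  · change LinearMap.range f = LinearMap.ker (B.liftQ g hB)
    ext e
    constructor
    · rintro ⟨z, rfl⟩
      obtain ⟨y, rfl⟩ := hc z
      rw [hfy]
      have : i y ∈ LinearMap.ker g := by rw [← hr]; exact ⟨y, rfl⟩
      exact this
    · intro he
      obtain ⟨w, rfl⟩ := B.mkQ_surjective e
      have : w ∈ LinearMap.ker g := he
      rw [← hr] at this
      obtain ⟨y, rfl⟩ := this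
      exact ⟨c y, hfy y⟩

theorem Good.unique [IsArtinianRing A] (hNak : IsNakayama A) {Z E₀ V N : ModuleCat.{0} A}
    {f₀ : Z ⟶ E₀} {g₀ : E₀ ⟶ V} (h : Good f₀ g₀) (hN : IsTauOf A N V) : Nonempty (N ≅ Z) := by
  obtain ⟨E, f, g, hf, hg, ⟨w, hex⟩, hns, hind, _, hlift⟩ := hN
  rw [ShortComplex.moduleCat_exact_iff_range_eq_ker] at hex
  have hex' : LinearMap.range f.hom = LinearMap.ker g.hom := hex
  have hfi := inj_of_mono hf
  have hsv := h.sv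
  have hsz := h.sz
  obtain ⟨a, ha⟩ := h.lift hNak g.hom (by
    rintro ⟨s, hs⟩
    exact hns ⟨ModuleCat.ofHom s, ModuleCat.hom_ext hs⟩)
  obtain ⟨b', hb'⟩ := hlift E₀ g₀ (by
    rintro ⟨s, hs⟩
    exact h.nonsplit s.hom (congrArg ModuleCat.Hom.hom hs))
  let b : E₀ →ₗ[A] E := b'.hom
  have hb : g.hom ∘ₗ b = g₀.hom := congrArg ModuleCat.Hom.hom hb'
  have hax : ∀ x, g₀.hom (a x) = g.hom x := fun x => LinearMap.congr_fun ha x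
  have hbx : ∀ x, g.hom (b x) = g₀.hom x := fun x => LinearMap.congr_fun hb x
  have hab : Function.Surjective (a ∘ₗ b) := by
    apply h.us.surj_of_comp g₀.hom
    rw [← LinearMap.comp_assoc, ha, hb]
    exact exists_nonzero_of_surj h.surj
  have hfin : Module.Finite A E₀ := h.us.finite
  have habi : Function.Injective (a ∘ₗ b) :=
    IsNoetherian.injective_of_surjective_endomorphism (a ∘ₗ b) hab
  have habx : ∀ x, a (b x) = 0 → x = 0 := fun x hx => habi (by
    rw [map_zero]; exact hx)
  have key : ∀ e, g₀.hom e = 0 → ∃ z n, f.hom n = b (f₀.hom z) ∧ a (f.hom n) = e := by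
    intro e he
    obtain ⟨x, hx⟩ := hab e
    have hx' : a (b x) = e := hx
    have h1 : g₀.hom x = 0 := by rw [← hbx, ← hax, hx', he]
    have h2 : x ∈ LinearMap.range f₀.hom := by rw [h.ex]; exact h1
    obtain ⟨z, rfl⟩ := h2
    have h3 : b (f₀.hom z) ∈ LinearMap.range f.hom := by
      rw [hex']
      change g.hom (b (f₀.hom z)) = 0
      rw [hbx, h1]
    obtain ⟨n, hn⟩ := h3
    exact ⟨z, n, hn, by rw [hn, hx']⟩
  have hafn : ∀ n, g₀.hom (a (f.hom n)) = 0 := fun n => by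
    rw [hax]
    have : f.hom n ∈ LinearMap.ker g.hom := by rw [← hex']; exact ⟨n, rfl⟩
    exact this
  let N₁ : Submodule A N := (LinearMap.range (b ∘ₗ f₀.hom)).comap f.hom
  let N₂ : Submodule A N := LinearMap.ker (a ∘ₗ f.hom)
  have hcompl : IsCompl N₁ N₂ := by
    constructor
    · rw [Submodule.disjoint_def]
      rintro n ⟨z, hz⟩ hn2
      have hz' : b (f₀.hom z) = f.hom n := hz
      have hn2' : a (f.hom n) = 0 := hn2
      rw [← hz'] at hn2'
      have h1 := habx _ hn2'
      rw [h1, map_zero] at hz'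
      exact hfi (by rw [← hz', map_zero])
    · rw [codisjoint_iff, eq_top_iff]
      intro n _
      obtain ⟨z, n', hn', he⟩ := key _ (hafn n)
      refine Submodule.mem_sup.2 ⟨n', ⟨z, hn'.symm⟩, n - n', ?_, by abel⟩
      change a (f.hom (n - n')) = 0
      rw [map_sub, map_sub, he, sub_self]
  have hN2 : N₂ = ⊥ := by
    refine (hind.2 N₁ N₂ hcompl).resolve_left fun h1 => ?_
    have hnt := IsSimpleModule.nontrivial A Z
    obtain ⟨z, hz⟩ := exists_ne (0 : Z)
    have h2 : f₀.hom z ∈ LinearMap.ker g₀.hom := by rw [← h.ex]; exact ⟨z, rfl⟩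
    obtain ⟨z', n, hn, he⟩ := key _ h2
    have h3 : n ∈ N₁ := ⟨z', hn.symm⟩
    rw [h1] at h3
    have h4 : n = 0 := h3
    rw [h4, map_zero, map_zero] at he
    exact hz (h.inj (by rw [← he, map_zero]))
  have hinj : Function.Injective (a ∘ₗ f.hom) := by
    rw [← LinearMap.ker_eq_bot]; exact hN2
  have hrange : LinearMap.range (a ∘ₗ f.hom) = LinearMap.range f₀.hom := by
    rw [h.ex]
    ext e
    constructor
    · rintro ⟨n, rfl⟩; exact hafn n
    · intro he
      obtain ⟨z, n, _, hn⟩ := key e he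
      exact ⟨n, hn⟩
  exact ⟨((LinearEquiv.ofInjective _ hinj).trans ((LinearEquiv.ofEq _ _ hrange).trans
    (LinearEquiv.ofInjective _ h.inj).symm)).toModuleIso⟩

theorem tau_unique [IsArtinianRing A] (hNak : IsNakayama A) {V V' N N' : ModuleCat.{0} A}
    (hV : IsSimpleModule A V) (e : V ≅ V') (hN : IsTauOf A N V) (hN' : IsTauOf A N' V') :
    Nonempty (N ≅ N') := by
  obtain ⟨P, _, _, p, hP, hPf, hPU, hp⟩ := exists_proj hNak (S := V)
  have hker : LinearMap.ker p ≠ ⊥ := by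
    intro hk
    rw [LinearMap.ker_eq_bot] at hk
    have hVp : Module.Projective A V :=
      Module.Projective.of_equiv (LinearEquiv.ofBijective p ⟨hk, hp⟩)
    obtain ⟨E, f, g, hf, hg, _, hns, _⟩ := hN
    obtain ⟨s, hs⟩ := Module.projective_lifting_property g.hom (LinearMap.id (R := A) (M := V))
      (surj_of_epi hg)
    exact hns ⟨ModuleCat.ofHom s, ModuleCat.hom_ext hs⟩
  have hnt : Nontrivial (LinearMap.ker p) := Submodule.nontrivial_iff_ne_bot.2 hker
  obtain ⟨Z, _, _, c, hZ, hc⟩ := (hPU.of_injective (LinearMap.ker p).subtype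
    (Submodule.injective_subtype _)).exists_top
  obtain ⟨E, f, g, h⟩ := exists_good (W := ModuleCat.of A P)
    (Y := ModuleCat.of A (LinearMap.ker p)) (Z := ModuleCat.of A Z) hPU hV hZ
    (LinearMap.ker p).subtype (Submodule.injective_subtype _) p hp (by simp) c hc
  obtain ⟨e1⟩ := h.unique hNak hN
  obtain ⟨e2⟩ := (h.comp_iso e).unique hNak hN'
  exact ⟨e1 ≪≫ e2.symm⟩

end Tau

end NakAux
namespace NakAux

open ArtinAlg

section Final

variable {A : Type} [Ring A]

theorem us_of_simple {S : ModuleCat.{0} A} (hS : IsSimpleModule A S) : US A S := by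
  intro N₁ N₂
  rcases eq_bot_or_eq_top N₁ with h | h
  · left; rw [h]; exact bot_le
  · right; rw [h]; exact le_top

theorem ess_le {V P : ModuleCat.{0} A} (hV : IsSimpleModule A V) {f : V ⟶ P} (hf : Mono f)
    (hess : ∀ (N : ModuleCat.{0} A) (g : P ⟶ N), Mono (f ≫ g) → Mono g)
    {N : Submodule A P} (hN : N ≠ ⊥) : LinearMap.range f.hom ≤ N := by
  rcases eq_bot_or_eq_top (N.comap f.hom) with h | h
  · exfalso
    have h1 : Mono (f ≫ ModuleCat.ofHom N.mkQ) := by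
      apply mono_of_inj
      rw [← LinearMap.ker_eq_bot, eq_bot_iff, ← h]
      intro x hx
      have hx' : N.mkQ (f.hom x) = 0 := hx
      simpa using hx'
    have h2 := inj_of_mono (hess _ _ h1)
    apply hN
    have h3 : LinearMap.ker N.mkQ = ⊥ := LinearMap.ker_eq_bot.2 h2
    rwa [Submodule.ker_mkQ] at h3
  · rintro _ ⟨x, rfl⟩
    have : x ∈ N.comap f.hom := by rw [h]; trivial
    exact this

theorem soc_unique {P P' V V' : ModuleCat.{0} A} (e : P ≅ P') (h : IsSimpleSocOf A P V)
    (h' : IsSimpleSocOf A P' V') : Nonempty (V ≅ V') := by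
  obtain ⟨hV, f, hf, hess⟩ := h
  obtain ⟨hV', f', hf', hess'⟩ := h'
  let k' : V' →ₗ[A] P := e.symm.toLinearEquiv.toLinearMap ∘ₗ f'.hom
  have hk' : Function.Injective k' := e.symm.toLinearEquiv.injective.comp (inj_of_mono hf')
  have hne : LinearMap.range k' ≠ ⊥ := by
    intro hb
    rw [LinearMap.range_eq_bot] at hb
    have := IsSimpleModule.nontrivial A V'
    obtain ⟨x, hx⟩ := exists_ne (0 : V')
    apply hx
    apply hk'
    rw [hb]; simp
  have hle := ess_le hV hf hess hne
  let q := LinearEquiv.ofInjective k' hk'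
  let k : V →ₗ[A] V' := q.symm.toLinearMap ∘ₗ
    LinearMap.codRestrict (LinearMap.range k') f.hom (fun x => hle ⟨x, rfl⟩)
  have hk : Function.Injective k := by
    apply q.symm.injective.comp
    intro x y hxy
    exact inj_of_mono hf (congrArg Subtype.val hxy)
  have hk0 : k ≠ 0 := by
    intro h0
    have := IsSimpleModule.nontrivial A V
    obtain ⟨x, hx⟩ := exists_ne (0 : V)
    apply hx; apply hk; rw [h0]; simp
  exact ⟨(LinearEquiv.ofBijective k (LinearMap.bijective_of_ne_zero hk0)).toModuleIso⟩

theorem env_unique {S I I' : ModuleCat.{0} A} (h : IsInjEnvOf A S I) (h' : IsInjEnvOf A S I') :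
    Nonempty (I ≅ I') := by
  obtain ⟨f, hI, hf, hess⟩ := h
  obtain ⟨f', hI', hf', hess'⟩ := h'
  let a : I ⟶ I' := Injective.factorThru f' f
  have ha : f ≫ a = f' := Injective.comp_factorThru f' f
  have ham : Mono a := hess _ a (by rw [ha]; exact hf')
  let s : I' ⟶ I := Injective.factorThru (𝟙 I) a
  have hs : a ≫ s = 𝟙 I := Injective.comp_factorThru _ _
  have hsf : f' ≫ s = f := by rw [← ha, Category.assoc, hs, Category.comp_id]
  have hsm : Mono s := hess' _ s (by rw [hsf]; exact hf)
  refine ⟨⟨a, s, hs, ?_⟩⟩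
  rw [← cancel_mono s, Category.assoc, hs]; simp

theorem env_nontrivial {S I : ModuleCat.{0} A} (hS : IsSimpleModule A S)
    (h : IsInjEnvOf A S I) : Nontrivial I := by
  obtain ⟨f, hI, hf, hess⟩ := h
  have := IsSimpleModule.nontrivial A S
  exact (inj_of_mono hf).nontrivial

theorem env_US (hNak : IsNakayama A) {S I : ModuleCat.{0} A} (hS : IsSimpleModule A S)
    (h : IsInjEnvOf A S I) : US A I := by
  obtain ⟨f, hI, hf, hess⟩ := h
  have key : ∀ F : Submodule A I, F.FG → F ≠ ⊥ → US A F := by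
    intro F hF hF0
    have : Module.Finite A F := Module.Finite.iff_fg.2 hF
    have : Nontrivial F := (Submodule.nontrivial_iff_ne_bot).2 hF0
    apply nak hNak
    intro N₁ N₂ hc
    by_contra hcon
    push Not at hcon
    obtain ⟨h1, h2⟩ := hcon
    have m1 : N₁.map F.subtype ≠ ⊥ := by
      exact fun hb => h1 (Submodule.map_injective_of_injective F.injective_subtype
        (hb.trans (Submodule.map_bot _).symm))
    have m2 : N₂.map F.subtype ≠ ⊥ := by
      exact fun hb => h2 (Submodule.map_injective_of_injective F.injective_subtype
        (hb.trans (Submodule.map_bot _).symm))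
    have l1 := ess_le hS hf hess m1
    have l2 := ess_le hS hf hess m2
    have := IsSimpleModule.nontrivial A S
    obtain ⟨x, hx⟩ := exists_ne (0 : S)
    obtain ⟨y1, hy1, e1⟩ := l1 ⟨x, rfl⟩
    obtain ⟨y2, hy2, e2⟩ := l2 ⟨x, rfl⟩
    have e12 : y1 = y2 := F.injective_subtype (e1.trans e2.symm)
    subst e12
    have hb : y1 ∈ N₁ ⊓ N₂ := ⟨hy1, hy2⟩
    rw [hc.inf_eq_bot, Submodule.mem_bot] at hb
    subst hb
    apply hx
    apply inj_of_mono hf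
    rw [← e1]; simp
  intro N₁ N₂
  by_contra hcon
  push Not at hcon
  obtain ⟨h1, h2⟩ := hcon
  obtain ⟨x, hx1, hx2⟩ := Set.not_subset.1 h1
  obtain ⟨y, hy2, hy1⟩ := Set.not_subset.1 h2
  let F : Submodule A I := Submodule.span A {x, y}
  have hxF : x ∈ F := Submodule.subset_span (by simp)
  have hyF : y ∈ F := Submodule.subset_span (by simp)
  have hF : F.FG := Submodule.fg_span (by simp)
  have hF0 : F ≠ ⊥ := by
    intro hb
    rw [hb, Submodule.mem_bot] at hxF
    subst hxF
    exact hx2 (zero_mem N₂)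
  rcases key F hF hF0 (N₁.comap F.subtype) (N₂.comap F.subtype) with hle | hle
  · exact hx2 (hle (show (⟨x, hxF⟩ : F) ∈ _ from hx1))
  · exact hy1 (hle (show (⟨y, hyF⟩ : F) ∈ _ from hy2))

variable [IsArtinianRing A]

theorem erel_unique {S : ModuleCat.{0} A} {x y : ℕ∞} (hx : ERelVal A S x) (hy : ERelVal A S y) :
    x = y := by
  obtain ⟨I, hI, rfl⟩ := hx
  obtain ⟨J, hJ, rfl⟩ := hy
  obtain ⟨e⟩ := env_unique hI hJ
  rw [projDim_iso e]

theorem tau_syz (hNak : IsNakayama A) {S Y U : ModuleCat.{0} A} (hS : IsSimpleModule A S)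
    (hY : IsSyzygyOf A S Y) (hU : IsSimpleTopOf A Y U) : IsTauOf A U S := by
  obtain ⟨P, f, i, hf, hi, hr⟩ := syz_data hY
  have hP := cover_US hNak (us_of_simple hS) hf
  obtain ⟨c, hc⟩ := top_surj hU
  obtain ⟨E, a, b, hg⟩ := exists_good hP hS hU.1 i hi f.hom (surj_of_epi hf.2.1) hr c hc
  exact hg.tau hNak

theorem gamma_step (hNak : IsNakayama A) {M Y₁ Y₂ U Z : ModuleCat.{0} A} (hM : US A M)
    (h1 : IsSyzygyOf A M Y₁) (h2 : IsSyzygyOf A Y₁ Y₂) (hU : IsSimpleTopOf A M U)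
    (hZ : IsSimpleTopOf A Y₂ Z) : IsGammaOf A U Z := by
  have hY1 : Nontrivial Y₁ := by
    by_contra hc
    rw [not_nontrivial_iff_subsingleton] at hc
    have := syz_sub hc h2
    have := top_nontrivial hZ
    exact not_subsingleton Y₂ ‹_›
  have hUY := syz_US hNak hM h1
  obtain ⟨P, f, i, hf, hi, hr⟩ := syz_data h1
  obtain ⟨Q, f1, i1, hf1, hi1, hr1⟩ := syz_data h2
  have hP := cover_US hNak hM hf
  have hQ := cover_US hNak hUY hf1
  have hUs := hU.1
  obtain ⟨u, hu⟩ := top_surj hU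
  have := hP.finite
  have hArt : IsArtinian A P := inferInstance
  have hker : LinearMap.range i ≠ ⊥ := by
    intro hb
    rw [LinearMap.range_eq_bot] at hb
    obtain ⟨x, hx⟩ := exists_ne (0 : Y₁)
    apply hx; apply hi; rw [hb]; simp
  obtain ⟨V, hVa, hVle⟩ := (eq_bot_or_exists_atom_le (LinearMap.range i)).resolve_left hker
  have hVs : IsSimpleModule A V := isSimpleModule_iff_isAtom.2 hVa
  refine ⟨P, ⟨f ≫ ModuleCat.ofHom u, hf.1, epi_of_surj (hu.comp (surj_of_epi hf.2.1)),
    fun N g hg => hP.ess hUs N g hg⟩, ModuleCat.of A V, ⟨hVs, ModuleCat.ofHom V.subtype,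
    mono_of_inj V.injective_subtype, ?_⟩, ?_⟩
  · intro N g hg
    apply mono_of_inj
    rw [← LinearMap.ker_eq_bot]
    by_contra hk
    have hVk : V ≤ LinearMap.ker g.hom := by
      rcases hP V (LinearMap.ker g.hom) with hle | hle
      · exact hle
      · exact ((hVa.le_iff.1 hle).resolve_left hk).ge
    have := IsSimpleModule.nontrivial A V
    obtain ⟨x, hx⟩ := exists_ne (0 : V)
    apply hx
    apply inj_of_mono hg
    have h0 : g.hom x.1 = 0 := hVk x.2
    rw [map_zero]
    exact h0
  · let ψ : Q →ₗ[A] P := i ∘ₗ f1.hom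
    have hψ : ∀ p ∈ V, ∃ q, ψ q = p := by
      intro p hp
      obtain ⟨y, rfl⟩ := hVle hp
      obtain ⟨q, rfl⟩ := surj_of_epi hf1.2.1 y
      exact ⟨q, rfl⟩
    let W : Submodule A Q := V.comap ψ
    have hψi : ∀ y, ψ (i1 y) = 0 := by
      intro y
      have : i1 y ∈ LinearMap.ker f1.hom := hr1 ▸ ⟨y, rfl⟩
      have h0 : f1.hom (i1 y) = 0 := this
      change i (f1.hom (i1 y)) = 0
      rw [h0, map_zero]
    let i' : Y₂ →ₗ[A] W := LinearMap.codRestrict W i1 (fun y => by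
      change ψ (i1 y) ∈ V
      rw [hψi]; exact zero_mem V)
    let g' : W →ₗ[A] V := LinearMap.restrict ψ (fun x hx => hx)
    obtain ⟨c, hc⟩ := top_surj hZ
    obtain ⟨E, a, b, hg⟩ := exists_good (W := ModuleCat.of A W) (V := ModuleCat.of A V) (Y := Y₂)
      (Z := Z) (hQ.of_injective W.subtype W.injective_subtype) hVs hZ.1 i'
      (fun x y hxy => hi1 (congrArg Subtype.val hxy)) g'
      (by
        rintro ⟨p, hp⟩
        obtain ⟨q, rfl⟩ := hψ p hp
        exact ⟨⟨q, hp⟩, rfl⟩)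
      (by
        ext ⟨w, hw⟩
        constructor
        · rintro ⟨y, hy⟩
          have hy' : i1 y = w := congrArg Subtype.val hy
          subst hy'
          exact Subtype.ext (hψi y)
        · intro hk
          have hk' : ψ w = 0 := congrArg Subtype.val hk
          have hk2 : f1.hom w = 0 := hi (by rw [map_zero]; exact hk')
          have hk3 : w ∈ LinearMap.range i1 := hr1 ▸ hk2
          obtain ⟨y, rfl⟩ := hk3
          exact ⟨y, rfl⟩) c hc
    exact hg.tau hNak

theorem iter_of_nth (hNak : IsNakayama A) (t : ℕ) : ∀ {M X T U : ModuleCat.{0} A}, US A M →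
    IsNthSyzygy A (2 * t) M X → IsSimpleTopOf A X T → IsSimpleTopOf A M U →
    IterRel A (IsGammaOf A) t U T := by
  induction t with
  | zero =>
    rintro M X T U hM ⟨e⟩ hT hU
    exact top_iso hM hU e.symm hT
  | succ t ih =>
    rintro M X T U hM ⟨Y₁, hY1, Y₂, hY2, hX⟩ hT hU
    have h2 : US A Y₂ := syz_US hNak (syz_US hNak hM hY1) hY2
    have hnt : Nontrivial Y₂ := by
      by_contra hc
      rw [not_nontrivial_iff_subsingleton] at hc
      have := nth_sub _ hc hX
      have := top_nontrivial hT
      exact not_subsingleton X ‹_›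
    obtain ⟨Z, hZ⟩ := exists_simpleTop h2 hnt
    exact ⟨Z, gamma_step hNak hM hY1 hY2 hU hZ, ih h2 hX hT hZ⟩

theorem gamma_unique (hNak : IsNakayama A) {U U' Z Z' : ModuleCat.{0} A} (e : U ≅ U')
    (h : IsGammaOf A U Z) (h' : IsGammaOf A U' Z') : Nonempty (Z ≅ Z') := by
  obtain ⟨P, ⟨f, hf⟩, V, hV, hZ⟩ := h
  obtain ⟨P', ⟨f', hf'⟩, V', hV', hZ'⟩ := h'
  obtain ⟨a, _⟩ := cover_unique (cover_iso hf e) hf'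
  obtain ⟨b⟩ := soc_unique a hV hV'
  exact tau_unique hNak hV.1 b hZ hZ'

theorem iter_unique (hNak : IsNakayama A) (t : ℕ) : ∀ {U U' T T' : ModuleCat.{0} A}, (U ≅ U') →
    IterRel A (IsGammaOf A) t U T → IterRel A (IsGammaOf A) t U' T' → Nonempty (T ≅ T') := by
  induction t with
  | zero => rintro U U' T T' e ⟨a⟩ ⟨b⟩; exact ⟨a.symm ≪≫ e ≪≫ b⟩
  | succ t ih =>
    rintro U U' T T' e ⟨Z, hZ, h⟩ ⟨Z', hZ', h'⟩
    obtain ⟨c⟩ := gamma_unique hNak e hZ hZ'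
    exact ih c h h'

theorem main_even (hNak : IsNakayama A) {S T : ModuleCat.{0} A} (hS : IsSimpleModule A S) (t : ℕ)
    (hE : ERelVal A S ((2 * t : ℕ) : ℕ∞)) :
    HRel A S T ↔ ∃ U, IsPhiOf A S U ∧ IterRel A (IsGammaOf A) t U T := by
  constructor
  · rintro ⟨_, hT, z, hz, N, hN, X, hX, hXT⟩
    have hzt : z = 2 * t := by exact_mod_cast erel_unique hz hE
    subst hzt
    rcases hN with ⟨ho, _⟩ | ⟨_, hN⟩
    · exfalso
      obtain ⟨k, hk⟩ := ho
      omega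
    have hNU := env_US hNak hS hN
    obtain ⟨U, hU⟩ := exists_simpleTop hNU (env_nontrivial hS hN)
    exact ⟨U, ⟨N, hN, hU⟩, iter_of_nth hNak t hNU hX hXT hU⟩
  · rintro ⟨U, ⟨J, hJ, hU⟩, hit⟩
    have hJU := env_US hNak hS hJ
    have hJn := env_nontrivial hS hJ
    obtain ⟨X, hX⟩ := nth_exists hNak (2 * t) hJU
    have hle : ((2 * t : ℕ) : ℕ∞) ≤ projDim A J := by
      obtain ⟨I, hI, heq⟩ := hE
      obtain ⟨e⟩ := env_unique hI hJ
      rw [heq, projDim_iso e]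
      exact min_le_right _ _
    have hXn := nth_nontrivial hJn hle hX
    have hXU := nth_US hNak _ hJU hX
    obtain ⟨T', hT'⟩ := exists_simpleTop hXU hXn
    have hit' := iter_of_nth hNak t hJU hX hT' hU
    obtain ⟨e⟩ := iter_unique hNak t (Iso.refl U) hit' hit
    have hT := top_of_iso hXU hT' e
    exact ⟨hS, hT.1, 2 * t, hE, J, Or.inr ⟨⟨t, by omega⟩, hJ⟩, X, hX, hT⟩

theorem main_odd (hNak : IsNakayama A) {S T : ModuleCat.{0} A} (hS : IsSimpleModule A S) (t : ℕ)
    (hE : ERelVal A S ((2 * t + 1 : ℕ) : ℕ∞)) :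
    HRel A S T ↔ ∃ U, IsTauOf A U S ∧ IterRel A (IsGammaOf A) t U T := by
  have key : ∀ {X T' : ModuleCat.{0} A}, IsNthSyzygy A (2 * t + 1) S X → IsSimpleTopOf A X T' →
      ∃ U, IsTauOf A U S ∧ IterRel A (IsGammaOf A) t U T' := by
    rintro X T' ⟨Y, hY, hX⟩ hT'
    have hYU := syz_US hNak (us_of_simple hS) hY
    have hnt : Nontrivial Y := by
      by_contra hc
      rw [not_nontrivial_iff_subsingleton] at hc
      have := nth_sub _ hc hX
      have := top_nontrivial hT'
      exact not_subsingleton X ‹_›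
    obtain ⟨U, hU⟩ := exists_simpleTop hYU hnt
    exact ⟨U, tau_syz hNak hS hY hU, iter_of_nth hNak t hYU hX hT' hU⟩
  constructor
  · rintro ⟨_, hT, z, hz, N, hN, X, hX, hXT⟩
    have hzt : z = 2 * t + 1 := by exact_mod_cast erel_unique hz hE
    subst hzt
    rcases hN with ⟨_, rfl⟩ | ⟨he, _⟩
    · exact key hX hXT
    · exfalso
      obtain ⟨k, hk⟩ := he
      omega
  · rintro ⟨U, hU, hit⟩
    obtain ⟨X, hX⟩ := nth_exists hNak (2 * t + 1) (us_of_simple hS)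
    have hle : ((2 * t + 1 : ℕ) : ℕ∞) ≤ projDim A S := by
      obtain ⟨I, hI, heq⟩ := hE
      rw [heq]
      exact min_le_left _ _
    have hXn := nth_nontrivial (IsSimpleModule.nontrivial A S) hle hX
    have hXU := nth_US hNak _ (us_of_simple hS) hX
    obtain ⟨T', hT'⟩ := exists_simpleTop hXU hXn
    obtain ⟨U', hU', hit'⟩ := key hX hT'
    obtain ⟨a⟩ := tau_unique hNak hS (Iso.refl S) hU' hU
    obtain ⟨e⟩ := iter_unique hNak t a hit' hit
    have hT := top_of_iso hXU hT' e
    exact ⟨hS, hT.1, 2 * t + 1, hE, S, Or.inl ⟨⟨t, rfl⟩, rfl⟩, X, hX, hT⟩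

end Final

end NakAux

open ArtinAlg in
/-- Let `A` be a Nakayama algebra and `S` a simple module. If
`e(S) = 2t`, then `h(S) = γ^t (φ S)` with `φ S = top (I S)`; if `e(S) = 2t + 1`, then
`h(S) = γ^t (τ S)`. -/
theorem statement_18 (R : Type) [CommRing R] [IsArtinianRing R]
    (A : Type) [Ring A] [Algebra R A] [Module.Finite R A]
    (hNak : IsNakayama A)
    (S T : ModuleCat.{0} A) (hS : IsSimpleModule A ↥S) (t : ℕ) :
    (ERelVal A S ((2 * t : ℕ) : ℕ∞) →
      (HRel A S T ↔ ∃ U, IsPhiOf A S U ∧ IterRel A (IsGammaOf A) t U T)) ∧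
    (ERelVal A S ((2 * t + 1 : ℕ) : ℕ∞) →
      (HRel A S T ↔ ∃ U, IsTauOf A U S ∧ IterRel A (IsGammaOf A) t U T)) := by
  have : IsArtinianRing A := IsArtinianRing.of_finite R A
  exact ⟨fun h => NakAux.main_even hNak hS t h, fun h => NakAux.main_odd hNak hS t h⟩
end
end
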